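/- arXiv:2306.07587 — 2 statements merged into one kernel-verified Lean document; each statement's English description precedes it below -/
import Mathlib

section
/- Let p be a real polynomial in n variables, homogeneous of degree d ≥ 1, hyperbolic in direction e ∈ ℝⁿ with p(e) > 0, and suppose Λ₊ is regular. Let A ∈ ℝ^{m×n} have rank m, let b ∈ ℝᵐ with b ≠ 0, and let c ∈ ℝⁿ not lie in the row space of A. Then for any α ∈ (0,1) and any e' ∈ Λ₊₊ with Ae' = b, the quadratic program min{⟨c,x⟩ : Ax = b, x ∈ K_{e'}(α)} has at most one optimal solution: if x and x' both attain the minimum of ⟨c,·⟩ over {x : Ax = b} ∩ K_{e'}(α), then x = x'. -/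
open scoped BigOperators

/-- The univariate polynomial `t ↦ p(t • e - x)` associated to a multivariate polynomial `p`,
a direction `e` and a point `x`. -/
noncomputable def hypCharPoly {n : ℕ} (p : MvPolynomial (Fin n) ℝ) (e x : Fin n → ℝ) :
    Polynomial ℝ :=
  MvPolynomial.aeval (fun i => Polynomial.C (e i) * Polynomial.X - Polynomial.C (x i)) p

/-- `p` is a homogeneous polynomial of degree `d`, hyperbolic in direction `e`:
`p(e) ≠ 0` and for every `x` the polynomial `t ↦ p(t • e - x)` has `d` real roots
counted with multiplicity. -/
def IsHyperbolicPoly {n : ℕ} (p : MvPolynomial (Fin n) ℝ) (e : Fin n → ℝ) (d : ℕ) : Prop :=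
  p.IsHomogeneous d ∧ MvPolynomial.eval e p ≠ 0 ∧
    ∀ x : Fin n → ℝ, Multiset.card (hypCharPoly p e x).roots = d

/-- The (closed) hyperbolicity cone `Λ₊`: all hyperbolic eigenvalues are nonnegative. -/
def hypConeClosed {n : ℕ} (p : MvPolynomial (Fin n) ℝ) (e : Fin n → ℝ) : Set (Fin n → ℝ) :=
  {x | ∀ r ∈ (hypCharPoly p e x).roots, (0:ℝ) ≤ r}

/-- The open hyperbolicity cone `Λ₊₊`: all hyperbolic eigenvalues are positive. -/
def hypConeOpen {n : ℕ} (p : MvPolynomial (Fin n) ℝ) (e : Fin n → ℝ) : Set (Fin n → ℝ) :=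
  {x | ∀ r ∈ (hypCharPoly p e x).roots, (0:ℝ) < r}

/-- The gradient of `f(x) = -ln p(x)`, namely `g(x)ᵢ = -(∂ᵢ p)(x) / p(x)`. -/
noncomputable def gradNegLog {n : ℕ} (p : MvPolynomial (Fin n) ℝ) (x : Fin n → ℝ) :
    Fin n → ℝ :=
  fun i => -(MvPolynomial.eval x (MvPolynomial.pderiv i p)) / MvPolynomial.eval x p

/-- The Hessian of `f(x) = -ln p(x)`, namely
`H(x)ᵢⱼ = (∂ᵢp)(x)(∂ⱼp)(x)/p(x)² - (∂ᵢ∂ⱼp)(x)/p(x)`. -/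
noncomputable def hessNegLog {n : ℕ} (p : MvPolynomial (Fin n) ℝ) (x : Fin n → ℝ) :
    Matrix (Fin n) (Fin n) ℝ :=
  Matrix.of fun i j =>
    MvPolynomial.eval x (MvPolynomial.pderiv i p) * MvPolynomial.eval x (MvPolynomial.pderiv j p)
        / (MvPolynomial.eval x p) ^ 2
      - MvPolynomial.eval x (MvPolynomial.pderiv i (MvPolynomial.pderiv j p))
        / MvPolynomial.eval x p

/-- The local inner product `⟨u, v⟩_{e'} = uᵀ H(e') v`. -/
noncomputable def localIP {n : ℕ} (p : MvPolynomial (Fin n) ℝ) (e' u v : Fin n → ℝ) : ℝ :=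
  ∑ i, ∑ j, u i * hessNegLog p e' i j * v j

/-- The local norm `‖v‖_{e'} = ⟨v, v⟩_{e'}^{1/2}`. -/
noncomputable def localNorm {n : ℕ} (p : MvPolynomial (Fin n) ℝ) (e' v : Fin n → ℝ) : ℝ :=
  Real.sqrt (localIP p e' v v)

/-- The closed quadratic cone `K_{e'}(α) = {x : ⟨e', x⟩_{e'} ≥ α ‖x‖_{e'}}`. -/
noncomputable def quadCone {n : ℕ} (p : MvPolynomial (Fin n) ℝ) (e' : Fin n → ℝ) (α : ℝ) :
    Set (Fin n → ℝ) :=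
  {x | α * localNorm p e' x ≤ localIP p e' e' x}

/-- The hyperbolicity cone is regular: it contains no nonzero linear subspace. -/
def IsRegularCone {n : ℕ} (p : MvPolynomial (Fin n) ℝ) (e : Fin n → ℝ) : Prop :=
  ∀ W : Submodule ℝ (Fin n → ℝ), (W : Set (Fin n → ℝ)) ⊆ hypConeClosed p e → W = ⊥

/-! For `v ≠ 0` put `q(t) = p(e' + tv)`. Then `⟨v, v⟩_{e'} = (q'(0)² - q(0) q''(0)) / q(0)²`, which
is the sum of `1 / r²` over the roots `r` of `q`, because by Gårding's theorem `p` is hyperbolic in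
direction `e'` and hence `q` has only real roots. If `q` had no root at all, then the line `ℝv`
would lie in `Λ₊`, contradicting regularity. So the local form is positive definite and its norm is
strictly convex along non-parallel vectors. Two distinct minimizers satisfy `Ax = Ax' = b ≠ 0`, so
they are not parallel, and their midpoint is a minimizer in the interior of the cone. There `c` must
vanish on `ker A`, that is, `c` lies in the row space of `A`.

Gårding's theorem and the inclusion `ℝv ⊆ Λ₊` both come from following the roots of `p(a + tb)`
along a connected family of base points `a`: the leading coefficient `p(b) ≠ 0` is constant, so the
roots stay bounded and move continuously, and cannot leave a region of the complex plane without
crossing its frontier. -/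

section LineRestriction

open Polynomial

variable {σ R S : Type*}

/-- The restriction `t ↦ P(a + t b)` of a multivariate polynomial to the line through `a` in
direction `b`. The line may live over an algebra `S` over the coefficients, so that a real
polynomial can be restricted to a complex line. -/
noncomputable def lineRestrict [CommSemiring R] [CommSemiring S] [Algebra R S]
    (P : MvPolynomial σ R) (a b : σ → S) : S[X] :=
  MvPolynomial.aeval (fun i => C (a i) + C (b i) * X) P

section CommSemiring

variable [CommSemiring R] [CommSemiring S] [Algebra R S] {P : MvPolynomial σ R} {d : ℕ}

theorem aeval_lineRestrict {T : Type*} [CommSemiring T] [Algebra R T] [Algebra S T]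
    [IsScalarTower R S T] (P : MvPolynomial σ R) (a b : σ → S) (t : T) :
    aeval t (lineRestrict P a b) =
      MvPolynomial.aeval (algebraMap S T ∘ a + t • (algebraMap S T ∘ b)) P := by
  refine (MvPolynomial.comp_aeval_apply (fun i => C (a i) + C (b i) * X)
    ((aeval t : S[X] →ₐ[S] T).restrictScalars R) P).trans ?_
  congr 2 with i
  simp [mul_comm t]

theorem eval_lineRestrict (P : MvPolynomial σ R) (a b : σ → S) (t : S) :
    (lineRestrict P a b).eval t = MvPolynomial.aeval (a + t • b) P := by
  simpa [Function.comp_def, Polynomial.coe_aeval_eq_eval] using aeval_lineRestrict P a b t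

theorem aeval_smul_of_isHomogeneous (hP : P.IsHomogeneous d) (t : S) (x : σ → S) :
    MvPolynomial.aeval (t • x) P = t ^ d * MvPolynomial.aeval x P := by
  simp only [MvPolynomial.aeval_def, MvPolynomial.eval₂_eq, Finset.mul_sum]
  refine Finset.sum_congr rfl fun k hk => ?_
  simp only [Pi.smul_apply, smul_eq_mul, mul_pow, Finset.prod_mul_distrib,
    Finset.prod_pow_eq_pow_sum, ← hP.degree_eq_sum_deg_support hk]
  ring

theorem natDegree_lineRestrict_le (hP : P.IsHomogeneous d) (a b : σ → S) :
    (lineRestrict P a b).natDegree ≤ d := by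
  have hline : ∀ i, (C (a i) + C (b i) * X).natDegree ≤ 1 := fun i => by compute_degree
  have h := MvPolynomial.aeval_natDegree_le (P.map (algebraMap R S))
    (hP.map (algebraMap R S)).totalDegree_le _ hline
  rwa [MvPolynomial.aeval_map_algebraMap, mul_one] at h

theorem coeff_prod_sum_of_natDegree_le {ι : Type*} (s : Finset ι) (f : ι → S[X]) (m : ι → ℕ)
    (hf : ∀ i ∈ s, (f i).natDegree ≤ m i) :
    (∏ i ∈ s, f i).coeff (∑ i ∈ s, m i) = ∏ i ∈ s, (f i).coeff (m i) := by
  classical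
  induction s using Finset.induction_on with
  | empty => simp
  | insert j s hj ih =>
    rw [Finset.forall_mem_insert] at hf
    rw [Finset.prod_insert hj, Finset.sum_insert hj, Finset.prod_insert hj, ← ih hf.2]
    exact coeff_mul_add_eq_of_natDegree_le hf.1
      ((natDegree_prod_le s f).trans (Finset.sum_le_sum hf.2))

theorem coeff_lineRestrict (hP : P.IsHomogeneous d) (a b : σ → S) :
    (lineRestrict P a b).coeff d = MvPolynomial.aeval b P := by
  simp only [lineRestrict, MvPolynomial.aeval_def, MvPolynomial.eval₂_eq, finsetSum_coeff,
    Polynomial.algebraMap_apply, coeff_C_mul]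
  refine Finset.sum_congr rfl fun k hk => ?_
  have hpow (i : σ) : ((C (a i) + C (b i) * X) ^ k i).natDegree ≤ k i := by
    compute_degree
  rw [hP.degree_eq_sum_deg_support hk, coeff_prod_sum_of_natDegree_le _ _ _ fun i _ => hpow i]
  refine congrArg _ (Finset.prod_congr rfl fun i _ => ?_)
  have hlin : (C (a i) + C (b i) * X).natDegree ≤ 1 := by compute_degree
  simpa using coeff_pow_of_natDegree_le (m := k i) hlin

theorem lineRestrict_ne_zero (hP : P.IsHomogeneous d) (a : σ → S) {b : σ → S}
    (hb : MvPolynomial.aeval b P ≠ 0) : lineRestrict P a b ≠ 0 := fun h =>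
  hb <| by rw [← coeff_lineRestrict hP a b, h, coeff_zero]

theorem natDegree_lineRestrict (hP : P.IsHomogeneous d) (a : σ → S) {b : σ → S}
    (hb : MvPolynomial.aeval b P ≠ 0) : (lineRestrict P a b).natDegree = d :=
  (natDegree_lineRestrict_le hP a b).antisymm <|
    le_natDegree_of_ne_zero (coeff_lineRestrict hP a b ▸ hb)

theorem derivation_aeval_eq_sum_pderiv [Fintype σ] {A M : Type*} [CommSemiring A] [Algebra R A]
    [AddCommMonoid M] [Module A M] [Module R M] [IsScalarTower R A M] (D : Derivation R A M)
    (f : σ → A) (P : MvPolynomial σ R) :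
    D (MvPolynomial.aeval f P) =
      ∑ i, MvPolynomial.aeval f (MvPolynomial.pderiv i P) • D (f i) := by
  classical
  induction P using MvPolynomial.induction_on with
  | C r => simp
  | add P Q hP hQ => simp only [map_add, hP, hQ, add_smul, Finset.sum_add_distrib]
  | mul_X P j hP =>
    simp [MvPolynomial.pderiv_X, Derivation.leibniz, hP, add_smul, mul_smul,
      Finset.sum_add_distrib, Finset.smul_sum, Pi.single_apply, apply_ite]

theorem derivative_lineRestrict [Fintype σ] (P : MvPolynomial σ R) (a b : σ → S) :
    derivative (lineRestrict P a b) =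
      ∑ i, C (b i) * lineRestrict (MvPolynomial.pderiv i P) a b := by
  refine (derivation_aeval_eq_sum_pderiv (derivative'.restrictScalars R) _ P).trans ?_
  refine Finset.sum_congr rfl fun i _ => ?_
  have hline : derivative (C (a i) + C (b i) * X) = C (b i) := by simp
  exact (congrArg (lineRestrict (MvPolynomial.pderiv i P) a b * ·) hline).trans (mul_comm _ _)

end CommSemiring

end LineRestriction

section Roots

open Polynomial Metric Set

open scoped Topology

theorem norm_eval_le_of_no_roots_in_ball {Q : ℂ[X]} {d : ℕ} (hd : Q.natDegree ≤ d) {z w : ℂ}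
    {ε : ℝ} (hw : w ∈ ball z ε) (hQ : ∀ r ∈ ball z ε, Q.eval r ≠ 0) :
    ‖Q.eval w‖ ≤ 2 ^ d * ‖Q.eval z‖ := by
  have hfactor : ∀ r ∈ Q.roots, ‖w - r‖ ≤ 2 * ‖z - r‖ := fun r hr => by
    have hr : ε ≤ dist z r :=
      dist_comm r z ▸ not_lt.mp fun hrz => hQ r hrz (isRoot_of_mem_roots hr)
    rw [← dist_eq_norm, ← dist_eq_norm]
    linarith [dist_triangle w z r, mem_ball.mp hw]
  have hprod : (Q.roots.map fun r => ‖w - r‖).prod ≤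
      2 ^ Q.roots.card * (Q.roots.map fun r => ‖z - r‖).prod := by
    refine (Multiset.prod_map_le_prod_map₀ _ _ (fun r _ => norm_nonneg _) hfactor).trans_eq ?_
    simp [Multiset.prod_map_mul]
  have hnorm (u : ℂ) :
      ‖Q.eval u‖ = ‖Q.leadingCoeff‖ * (Q.roots.map fun r => ‖u - r‖).prod := by
    rw [(IsAlgClosed.splits Q).eval_eq_prod_roots, norm_mul]
    exact congrArg _ ((map_multiset_prod (normHom (α := ℂ)) _).trans (by simp))
  rw [hnorm, hnorm, mul_left_comm]
  gcongr
  refine hprod.trans ?_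
  gcongr
  · exact Multiset.prod_nonneg (Multiset.forall_mem_map_iff.mpr fun r _ => norm_nonneg _)
  · exact one_le_two
  · exact (card_roots' Q).trans hd

variable {σ R : Type*} [CommSemiring R] [Algebra R ℂ] {P : MvPolynomial σ R} {d : ℕ}

theorem continuous_aeval (P : MvPolynomial σ R) :
    Continuous fun a : σ → ℂ => MvPolynomial.aeval a P := by
  simpa only [MvPolynomial.aeval_def, MvPolynomial.eval₂_eq_eval_map] using
    MvPolynomial.continuous_eval (P.map (algebraMap R ℂ))

theorem isOpen_setOf_exists_aeval_add_smul_eq_zero (hP : P.IsHomogeneous d) {b : σ → ℂ}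
    (hb : MvPolynomial.aeval b P ≠ 0) {U : Set ℂ} (hU : IsOpen U) :
    IsOpen {a : σ → ℂ | ∃ t ∈ U, MvPolynomial.aeval (a + t • b) P = 0} := by
  refine isOpen_iff_mem_nhds.mpr fun a ⟨y, hy, hay⟩ => ?_
  obtain ⟨ε, hε, hball⟩ := isOpen_iff.mp hU y hy
  obtain ⟨x, hx, hxa⟩ : ∃ x ∈ ball y ε, (lineRestrict P a b).eval x ≠ 0 := by
    by_contra! hzero
    exact lineRestrict_ne_zero hP a hb <| eq_zero_of_infinite_isRoot _ <|
      (infinite_of_mem_nhds y (ball_mem_nhds y hε)).mono hzero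
  have hcont (z : ℂ) : Continuous fun a' : σ → ℂ => ‖MvPolynomial.aeval (a' + z • b) P‖ :=
    ((continuous_aeval P).comp (continuous_add_const _)).norm
  have hlt : 2 ^ d * ‖MvPolynomial.aeval (a + y • b) P‖ < ‖MvPolynomial.aeval (a + x • b) P‖ := by
    rw [hay, norm_zero, mul_zero, norm_pos_iff, ← eval_lineRestrict]
    exact hxa
  filter_upwards [((hcont y).const_mul (2 ^ d)).continuousAt.eventually_lt
    (hcont x).continuousAt hlt] with a' ha'
  by_contra hnone
  refine ha'.not_ge ?_
  rw [← eval_lineRestrict, ← eval_lineRestrict]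
  refine norm_eval_le_of_no_roots_in_ball (natDegree_lineRestrict_le hP a' b) hx fun t ht h => ?_
  exact hnone ⟨t, hball ht, (eval_lineRestrict P a' b t).symm.trans h⟩

theorem exists_forall_norm_lt_of_aeval_add_smul_eq_zero [Fintype σ] (hP : P.IsHomogeneous d)
    {b : σ → ℂ} (hb : MvPolynomial.aeval b P ≠ 0) (M : ℝ) :
    ∃ r : ℝ, ∀ a : σ → ℂ, ‖a‖ ≤ M → ∀ t : ℂ, MvPolynomial.aeval (a + t • b) P = 0 → ‖t‖ < r := by
  obtain ⟨δ, hδ, hball⟩ :=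
    Metric.eventually_nhds_iff.mp ((continuous_aeval P).continuousAt.eventually_ne hb)
  refine ⟨(|M| + 1) / δ, fun a ha t h => ?_⟩
  by_contra! ht
  have htpos : 0 < ‖t‖ := lt_of_lt_of_le (by positivity) ht
  have ht0 : t ≠ 0 := norm_pos_iff.mp htpos
  have hscale : a + t • b = t • (b + t⁻¹ • a) := by
    rw [smul_add, smul_smul, mul_inv_cancel₀ ht0, one_smul, add_comm]
  rw [hscale, aeval_smul_of_isHomogeneous hP] at h
  refine hball ?_ ((mul_eq_zero.mp h).resolve_left (pow_ne_zero _ ht0))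
  rw [dist_eq_norm, add_sub_cancel_left, norm_smul, norm_inv, inv_mul_lt_iff₀ htpos]
  rw [div_le_iff₀ hδ] at ht
  linarith [le_abs_self M]

theorem isClosed_setOf_exists_aeval_add_smul_eq_zero [Finite σ] (hP : P.IsHomogeneous d)
    {b : σ → ℂ} (hb : MvPolynomial.aeval b P ≠ 0) {F : Set ℂ} (hF : IsClosed F) :
    IsClosed {a : σ → ℂ | ∃ t ∈ F, MvPolynomial.aeval (a + t • b) P = 0} := by
  cases nonempty_fintype σ
  refine isOpen_compl_iff.mp (isOpen_iff_mem_nhds.mpr fun a ha => ?_)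
  obtain ⟨r, hr⟩ := exists_forall_norm_lt_of_aeval_add_smul_eq_zero hP hb (‖a‖ + 1)
  have hcont : Continuous fun q : (σ → ℂ) × ℂ => MvPolynomial.aeval (q.1 + q.2 • b) P :=
    (continuous_aeval P).comp (by fun_prop)
  have hne : ∀ᶠ a' in 𝓝 a, ∀ t ∈ F ∩ closedBall 0 r, MvPolynomial.aeval (a' + t • b) P ≠ 0 :=
    ((isCompact_closedBall 0 r).inter_left hF).eventually_forall_of_forall_eventually
      fun t ht => hcont.continuousAt.eventually_ne fun h => ha ⟨t, ht.1, h⟩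
  filter_upwards [hne, closedBall_mem_nhds a one_pos] with a' hne' ha' ⟨t, htF, ht⟩
  have hnorm : ‖a'‖ ≤ ‖a‖ + 1 := by
    linarith [norm_le_norm_add_norm_sub' a' a, mem_closedBall_iff_norm.mp ha']
  exact hne' t ⟨htF, mem_closedBall_zero_iff.mpr (hr a' hnorm t ht).le⟩ ht

-- The roots move continuously and stay bounded, so they can only enter `U` through its frontier.
theorem aeval_add_smul_ne_zero_of_isPreconnected [Finite σ] {X : Type*} [TopologicalSpace X]
    (hP : P.IsHomogeneous d) {b : σ → ℂ} (hb : MvPolynomial.aeval b P ≠ 0) {f : X → σ → ℂ}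
    (hf : Continuous f) {T : Set X} (hT : IsPreconnected T) {U : Set ℂ} (hU : IsOpen U)
    (hfrontier : ∀ x ∈ T, ∀ t ∈ frontier U, MvPolynomial.aeval (f x + t • b) P ≠ 0)
    {x₀ : X} (hx₀ : x₀ ∈ T) (hbase : ∀ t ∈ U, MvPolynomial.aeval (f x₀ + t • b) P ≠ 0)
    {x : X} (hx : x ∈ closure T) {t : ℂ} (ht : t ∈ U) :
    MvPolynomial.aeval (f x + t • b) P ≠ 0 := by
  let bad (V : Set ℂ) : Set X := f ⁻¹' {a | ∃ t ∈ V, MvPolynomial.aeval (a + t • b) P = 0}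
  have hopen : IsOpen (bad U) := (isOpen_setOf_exists_aeval_add_smul_eq_zero hP hb hU).preimage hf
  have hclosed : IsClosed (bad (closure U)) :=
    (isClosed_setOf_exists_aeval_add_smul_eq_zero hP hb isClosed_closure).preimage hf
  have hclosure : closure (bad U) ⊆ bad (closure U) :=
    closure_minimal (preimage_mono fun a ⟨t, ht, h⟩ => ⟨t, subset_closure ht, h⟩) hclosed
  have hdisj : Disjoint (bad U) T := by
    refine Set.disjoint_left.mpr fun y hyU hyT => ?_
    have hsub : T ⊆ bad U := by
      refine hT.subset_of_closure_inter_subset hopen ⟨y, hyT, hyU⟩ fun x ⟨hx, hxT⟩ => ?_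
      obtain ⟨t, ht, h⟩ := hclosure hx
      exact ⟨t, by_contra fun htU => hfrontier x hxT t (hU.frontier_eq ▸ ⟨ht, htU⟩) h, h⟩
    obtain ⟨t, ht, h⟩ := hsub hx₀
    exact hbase t ht h
  exact fun h => Set.disjoint_left.mp (hdisj.closure_right hopen) ⟨t, ht, h⟩ hx

end Roots

section RealRooted

open Polynomial

/-- The Laguerre expression `q'² - q q''`, which is `-q² (log |q|)''` away from the roots of `q`. -/
noncomputable def laguerre {R : Type*} [CommRing R] (q : R[X]) : R[X] :=
  derivative q ^ 2 - q * derivative (derivative q)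

theorem laguerre_mul {R : Type*} [CommRing R] (f g : R[X]) :
    laguerre (f * g) = laguerre f * g ^ 2 + f ^ 2 * laguerre g := by
  simp only [laguerre, derivative_mul, derivative_add]
  ring

theorem laguerre_X_sub_C {R : Type*} [CommRing R] (r : R) : laguerre (X - C r) = 1 := by
  simp [laguerre]

variable {R : Type*} [CommRing R] [LinearOrder R] [IsStrictOrderedRing R] {q : R[X]}

theorem laguerre_eval_nonneg (hq : q.Splits) (x : R) : 0 ≤ (laguerre q).eval x := by
  induction hq using Submonoid.closure_induction with
  | one => simp [laguerre]
  | mem f hf =>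
    obtain ⟨a, rfl⟩ | ⟨a, rfl⟩ := hf <;> simp [laguerre]
  | mul f g _ _ hf hg =>
    rw [laguerre_mul, eval_add, eval_mul, eval_mul, eval_pow, eval_pow]
    positivity

theorem laguerre_eval_pos (hq : q.Splits) {x r : R} (hx : q.eval x ≠ 0) (hr : q.IsRoot r) :
    0 < (laguerre q).eval x := by
  obtain ⟨g, rfl⟩ := dvd_iff_isRoot.mpr hr
  have hg : g.Splits := splits_X_sub_C_mul_iff.mp hq
  have hgx : g.eval x ≠ 0 := fun h => hx (by rw [eval_mul, h, mul_zero])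
  rw [laguerre_mul, laguerre_X_sub_C, one_mul, eval_add, eval_mul, eval_pow, eval_pow]
  have hgnonneg := laguerre_eval_nonneg hg x
  positivity

theorem splits_iff_forall_aeval_eq_zero_im_eq_zero {q : ℝ[X]} (hq : q ≠ 0) :
    q.Splits ↔ ∀ z : ℂ, aeval z q = 0 → z.im = 0 := by
  refine ⟨fun h z hz => ?_, fun h => ?_⟩
  · obtain ⟨r, rfl⟩ := h.mem_range_of_isRoot (x := z) hq (by rwa [IsRoot.def, eval_map_algebraMap])
    exact Complex.ofReal_im r
  · refine Splits.of_splits_map (algebraMap ℝ ℂ) (IsAlgClosed.splits _) fun z hz => ?_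
    rw [mem_roots_map hq, ← aeval_def] at hz
    exact ⟨z.re, Complex.ext rfl (h z hz).symm⟩

end RealRooted

section Hyperbolic

open Polynomial

variable {n d : ℕ} {p : MvPolynomial (Fin n) ℝ} {e e' : Fin n → ℝ}

theorem hypCharPoly_eq_lineRestrict (p : MvPolynomial (Fin n) ℝ) (e x : Fin n → ℝ) :
    hypCharPoly p e x = lineRestrict p (-x) e := by
  simp only [hypCharPoly, lineRestrict, Pi.neg_apply, C_neg, sub_eq_neg_add]

theorem aeval_algebraMap_comp (p : MvPolynomial (Fin n) ℝ) (x : Fin n → ℝ) :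
    MvPolynomial.aeval (algebraMap ℝ ℂ ∘ x) p = (MvPolynomial.eval x p : ℂ) :=
  MvPolynomial.aeval_algebraMap_apply ℂ x p

theorem isHyperbolicPoly_iff_splits (hhom : p.IsHomogeneous d) (he : MvPolynomial.eval e p ≠ 0) :
    IsHyperbolicPoly p e d ↔ ∀ x, (lineRestrict p x e).Splits := by
  have hdeg (x : Fin n → ℝ) : (lineRestrict p x e).natDegree = d := natDegree_lineRestrict hhom x he
  simp only [IsHyperbolicPoly, hhom, he, ne_eq, not_false_eq_true, true_and, splits_iff_card_roots,
    hypCharPoly_eq_lineRestrict, hdeg]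
  exact (Equiv.neg _).forall_congr_left.trans (by simp)

namespace IsHyperbolicPoly

theorem isHomogeneous (hp : IsHyperbolicPoly p e d) : p.IsHomogeneous d := hp.1

theorem eval_ne_zero (hp : IsHyperbolicPoly p e d) : MvPolynomial.eval e p ≠ 0 := hp.2.1

theorem eval_smul (hp : IsHyperbolicPoly p e d) (t : ℝ) (x : Fin n → ℝ) :
    MvPolynomial.eval (t • x) p = t ^ d * MvPolynomial.eval x p :=
  aeval_smul_of_isHomogeneous hp.isHomogeneous t x

theorem aeval_ne_zero_of_im_ne_zero (hp : IsHyperbolicPoly p e d) (x : Fin n → ℝ) {z : ℂ}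
    (hz : z.im ≠ 0) :
    MvPolynomial.aeval (algebraMap ℝ ℂ ∘ x + z • (algebraMap ℝ ℂ ∘ e)) p ≠ 0 := by
  have hsplits := (isHyperbolicPoly_iff_splits hp.isHomogeneous hp.eval_ne_zero).mp hp x
  have hne := lineRestrict_ne_zero hp.isHomogeneous x hp.eval_ne_zero
  rw [← aeval_lineRestrict]
  exact fun h => hz ((splits_iff_forall_aeval_eq_zero_im_eq_zero hne).mp hsplits z h)

theorem of_forall_im_pos (hhom : p.IsHomogeneous d) (he : MvPolynomial.eval e p ≠ 0)
    (h : ∀ (x : Fin n → ℝ) (z : ℂ), 0 < z.im →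
      MvPolynomial.aeval (algebraMap ℝ ℂ ∘ x + z • (algebraMap ℝ ℂ ∘ e)) p ≠ 0) :
    IsHyperbolicPoly p e d := by
  refine (isHyperbolicPoly_iff_splits hhom he).mpr fun x => ?_
  refine (splits_iff_forall_aeval_eq_zero_im_eq_zero (lineRestrict_ne_zero hhom x he)).mpr
    fun z hz => ?_
  rw [aeval_lineRestrict] at hz
  rcases lt_trichotomy z.im 0 with hneg | hzero | hpos
  · refine absurd ?_ (h (-x) (-z) (by simpa using hneg))
    have hscale : algebraMap ℝ ℂ ∘ (-x) + (-z) • (algebraMap ℝ ℂ ∘ e) =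
        (-1 : ℂ) • (algebraMap ℝ ℂ ∘ x + z • (algebraMap ℝ ℂ ∘ e)) := by
      ext i
      simp only [Complex.coe_algebraMap, Complex.ofReal_comp_neg, neg_smul, Pi.add_apply,
        Pi.neg_apply, Function.comp_apply, Pi.smul_apply, smul_eq_mul, neg_mul, one_mul]
      ring
    rw [hscale, aeval_smul_of_isHomogeneous hhom, hz, mul_zero]
  · exact hzero
  · exact absurd hz (h x z hpos)

theorem splits_lineRestrict (hp : IsHyperbolicPoly p e d) (v : Fin n → ℝ) :
    (lineRestrict p e v).Splits := by
  have hne : lineRestrict p e v ≠ 0 := fun h => hp.eval_ne_zero <| by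
    simpa [h, ← MvPolynomial.aeval_eq_eval] using (eval_lineRestrict p e v 0).symm
  refine (splits_iff_forall_aeval_eq_zero_im_eq_zero hne).mpr fun z hz => ?_
  by_contra him
  have hz0 : z ≠ 0 := fun h => him (by simp [h])
  have hinv : (z⁻¹).im ≠ 0 := by simpa [Complex.inv_im, hz0] using him
  have hscale : algebraMap ℝ ℂ ∘ e + z • (algebraMap ℝ ℂ ∘ v) =
      z • (algebraMap ℝ ℂ ∘ v + z⁻¹ • (algebraMap ℝ ℂ ∘ e)) := by
    rw [smul_add, smul_inv_smul₀ hz0, add_comm]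
  rw [aeval_lineRestrict, hscale, aeval_smul_of_isHomogeneous hp.isHomogeneous] at hz
  exact mul_ne_zero (pow_ne_zero _ hz0) (hp.aeval_ne_zero_of_im_ne_zero v hinv) hz

theorem mem_roots_hypCharPoly (hp : IsHyperbolicPoly p e d) {x : Fin n → ℝ} {r : ℝ} :
    r ∈ (hypCharPoly p e x).roots ↔ MvPolynomial.eval (-x + r • e) p = 0 := by
  have hne := lineRestrict_ne_zero hp.isHomogeneous (-x) hp.eval_ne_zero
  rw [hypCharPoly_eq_lineRestrict, mem_roots hne, IsRoot.def, eval_lineRestrict]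
  rfl

theorem eval_ne_zero_of_mem_hypConeOpen (hp : IsHyperbolicPoly p e d) (he' : e' ∈ hypConeOpen p e) :
    MvPolynomial.eval e' p ≠ 0 := fun h => by
  refine lt_irrefl (0 : ℝ) (he' 0 (hp.mem_roots_hypCharPoly.mpr ?_))
  simpa [h] using hp.eval_smul (-1) e'

theorem exists_pos_of_aeval_eq_zero (hp : IsHyperbolicPoly p e d) (he' : e' ∈ hypConeOpen p e)
    {z : ℂ} (hz : MvPolynomial.aeval (algebraMap ℝ ℂ ∘ (-e') + z • (algebraMap ℝ ℂ ∘ e)) p = 0) :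
    ∃ r : ℝ, 0 < r ∧ z = r := by
  have him : z.im = 0 := by_contra fun h => hp.aeval_ne_zero_of_im_ne_zero (-e') h hz
  obtain ⟨r, rfl⟩ : ∃ r : ℝ, z = r := ⟨z.re, Complex.ext rfl him⟩
  refine ⟨r, he' r (hp.mem_roots_hypCharPoly.mpr ?_), rfl⟩
  rw [← Complex.ofReal_eq_zero, ← aeval_algebraMap_comp, ← hz]
  congr 2 with i
  simp

theorem aeval_I_smul_add_smul_ne_zero (hp : IsHyperbolicPoly p e d) (he' : e' ∈ hypConeOpen p e)
    {t : ℂ} (ht : 0 < t.im) :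
    MvPolynomial.aeval (Complex.I • (algebraMap ℝ ℂ ∘ e) + t • (algebraMap ℝ ℂ ∘ e')) p ≠ 0 := by
  intro h
  have ht0 : t ≠ 0 := fun h0 => by simp [h0] at ht
  have hscale : Complex.I • (algebraMap ℝ ℂ ∘ e) + t • (algebraMap ℝ ℂ ∘ e') =
      (-t) • (algebraMap ℝ ℂ ∘ (-e') + (-Complex.I / t) • (algebraMap ℝ ℂ ∘ e)) := by
    ext i
    simp only [Complex.coe_algebraMap, Pi.add_apply, Pi.smul_apply, Function.comp_apply,
      smul_eq_mul, Complex.ofReal_comp_neg, Pi.neg_apply, neg_mul]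
    field_simp
    ring
  rw [hscale, aeval_smul_of_isHomogeneous hp.isHomogeneous] at h
  obtain ⟨r, hr, hrt⟩ := hp.exists_pos_of_aeval_eq_zero he'
    ((mul_eq_zero.mp h).resolve_left (pow_ne_zero _ (neg_ne_zero.mpr ht0)))
  have him := congrArg Complex.im ((div_eq_iff ht0).mp hrt)
  rw [Complex.im_ofReal_mul, Complex.neg_im, Complex.I_im] at him
  linarith [mul_pos hr ht]

/-- Gårding's theorem. For `η > 0` the roots `t` of `p(x + iηe + te')` avoid the real axis; for
`x = 0` and `η = 1` none lies in the upper half-plane, so none does for any `x` and `η > 0`, and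
`η → 0` preserves this. -/
theorem of_mem_hypConeOpen (hp : IsHyperbolicPoly p e d) (he' : e' ∈ hypConeOpen p e) :
    IsHyperbolicPoly p e' d := by
  have hpe' := hp.eval_ne_zero_of_mem_hypConeOpen he'
  refine of_forall_im_pos hp.isHomogeneous hpe' fun x z hz => ?_
  let T : Set ((Fin n → ℝ) × ℝ) := Set.univ ×ˢ Set.Ioi 0
  have hT : IsPreconnected T := isPreconnected_univ.prod isPreconnected_Ioi
  let f : (Fin n → ℝ) × ℝ → Fin n → ℂ := fun q =>
    algebraMap ℝ ℂ ∘ q.1 + (q.2 * Complex.I) • (algebraMap ℝ ℂ ∘ e)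
  have hf : Continuous f := continuous_pi fun i => by simp only [f]; fun_prop
  have hfrontier : ∀ q ∈ T, ∀ t ∈ frontier {t : ℂ | 0 < t.im},
      MvPolynomial.aeval (f q + t • (algebraMap ℝ ℂ ∘ e')) p ≠ 0 := by
    rintro ⟨y, η⟩ ⟨-, hη⟩ t ht
    rw [Complex.frontier_setOfPred_lt_im, Set.mem_ofPred_eq] at ht
    obtain ⟨s, rfl⟩ : ∃ s : ℝ, t = s := ⟨t.re, Complex.ext rfl ht⟩
    have him : (η * Complex.I).im ≠ 0 := by simpa using (Set.mem_Ioi.mp hη).ne'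
    convert hp.aeval_ne_zero_of_im_ne_zero (y + s • e') him using 3
    ext i
    simp only [f, Complex.coe_algebraMap, Complex.coe_smul, Pi.add_apply, Function.comp_apply,
      Pi.smul_apply, smul_eq_mul, Complex.real_smul, Complex.ofReal_comp_add, Complex.ofReal_mul]
    ring
  have hbase : ∀ t ∈ {t : ℂ | 0 < t.im},
      MvPolynomial.aeval (f (0, 1) + t • (algebraMap ℝ ℂ ∘ e')) p ≠ 0 := fun t ht => by
    convert hp.aeval_I_smul_add_smul_ne_zero he' ht using 4
    ext i
    simp [f]
  have hclosure : (x, (0 : ℝ)) ∈ closure T := by simp [T, closure_prod_eq]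
  have hx := aeval_add_smul_ne_zero_of_isPreconnected hp.isHomogeneous
    (by rwa [aeval_algebraMap_comp, Complex.ofReal_ne_zero]) hf hT
    (isOpen_lt continuous_const Complex.continuous_im) hfrontier (by simp [T]) hbase hclosure hz
  simpa [f] using hx

theorem eval_neg_smul_add_smul_ne_zero (hp : IsHyperbolicPoly p e d) {x v : Fin n → ℝ}
    (hv : ∀ s : ℝ, MvPolynomial.eval (x + s • v) p ≠ 0) {α : ℝ} (hα : α ≠ 0) (β : ℝ) :
    MvPolynomial.eval (-(α • x + β • v)) p ≠ 0 := by
  have hscale : -(α • x + β • v) = (-α) • (x + (β / α) • v) := by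
    rw [smul_add, smul_smul, neg_mul, mul_div_cancel₀ _ hα, neg_add, neg_smul, neg_smul]
  rw [hscale, hp.eval_smul]
  exact mul_ne_zero (pow_ne_zero _ (neg_ne_zero.mpr hα)) (hv _)

theorem mem_hypConeClosed_of_forall_eval_ne_zero (hp : IsHyperbolicPoly p e d)
    (he' : e' ∈ hypConeOpen p e) {v : Fin n → ℝ}
    (hv : ∀ s : ℝ, MvPolynomial.eval (e' + s • v) p ≠ 0) : v ∈ hypConeClosed p e := by
  -- The roots `t` of `p(-(αe' + βv) + te)` are real and nonzero for `α > 0`, and positive at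
  -- `(α, β) = (1, 0)`, so they stay positive; then let `(α, β) → (0, 1)`.
  intro r hr
  by_contra! hneg
  let T : Set (ℝ × ℝ) := Set.Ioi 0 ×ˢ Set.univ
  have hT : IsPreconnected T := isPreconnected_Ioi.prod isPreconnected_univ
  let f : ℝ × ℝ → Fin n → ℂ := fun q => algebraMap ℝ ℂ ∘ (-(q.1 • e' + q.2 • v))
  have hf : Continuous f := continuous_pi fun i => by simp only [f]; fun_prop
  have hfrontier : ∀ q ∈ T, ∀ t ∈ frontier {t : ℂ | t.re < 0},
      MvPolynomial.aeval (f q + t • (algebraMap ℝ ℂ ∘ e)) p ≠ 0 := by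
    rintro ⟨α, β⟩ ⟨hα, -⟩ t ht h
    rw [Complex.frontier_setOfPred_re_lt, Set.mem_ofPred_eq] at ht
    have him : t.im = 0 := by_contra fun him => hp.aeval_ne_zero_of_im_ne_zero _ him h
    have hα0 : α ≠ 0 := (Set.mem_Ioi.mp hα).ne'
    rw [Complex.ext (w := 0) ht him, zero_smul, add_zero, aeval_algebraMap_comp,
      Complex.ofReal_eq_zero] at h
    exact hp.eval_neg_smul_add_smul_ne_zero hv hα0 β h
  have hbase : ∀ t ∈ {t : ℂ | t.re < 0},
      MvPolynomial.aeval (f (1, 0) + t • (algebraMap ℝ ℂ ∘ e)) p ≠ 0 := fun t ht h => by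
    simp only [f, one_smul, zero_smul, add_zero] at h
    obtain ⟨s, hs, rfl⟩ := hp.exists_pos_of_aeval_eq_zero he' h
    exact hs.not_gt ht
  have hclosure : ((0 : ℝ), (1 : ℝ)) ∈ closure T := by simp [T, closure_prod_eq]
  refine aeval_add_smul_ne_zero_of_isPreconnected hp.isHomogeneous
    (by rw [aeval_algebraMap_comp, Complex.ofReal_ne_zero]; exact hp.eval_ne_zero) hf hT
    (isOpen_lt Complex.continuous_re continuous_const) hfrontier (by simp [T]) hbase hclosure
    (t := r) hneg ?_
  have hline : f (0, 1) + (r : ℂ) • (algebraMap ℝ ℂ ∘ e) = algebraMap ℝ ℂ ∘ (-v + r • e) := by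
    ext i
    simp [f]
  rw [hline, aeval_algebraMap_comp, hp.mem_roots_hypCharPoly.mp hr, Complex.ofReal_zero]

end IsHyperbolicPoly

end Hyperbolic

section LocalInnerProduct

open Polynomial

variable {n d : ℕ} {p : MvPolynomial (Fin n) ℝ} {e e' : Fin n → ℝ}

theorem localIP_eq_toLinearMap₂' (p : MvPolynomial (Fin n) ℝ) (e' u v : Fin n → ℝ) :
    localIP p e' u v = Matrix.toLinearMap₂' ℝ (hessNegLog p e') u v := by
  rw [Matrix.toLinearMap₂'_apply, localIP]
  refine Finset.sum_congr rfl fun i _ => Finset.sum_congr rfl fun j _ => ?_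
  rw [smul_eq_mul, smul_eq_mul]
  ring

theorem localIP_self_eq (h : MvPolynomial.eval e' p ≠ 0) (v : Fin n → ℝ) :
    localIP p e' v v =
      (laguerre (lineRestrict p e' v)).eval 0 / MvPolynomial.eval e' p ^ 2 := by
  simp only [laguerre, derivative_lineRestrict, derivative_sum, derivative_C_mul, eval_sub,
    eval_pow, eval_finsetSum, eval_mul, eval_C, eval_lineRestrict, zero_smul, add_zero,
    MvPolynomial.aeval_eq_eval]
  rw [sq (∑ i, _), Finset.sum_mul_sum, Finset.mul_sum, ← Finset.sum_sub_distrib, Finset.sum_div,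
    localIP, Finset.sum_comm]
  refine Finset.sum_congr rfl fun j _ => ?_
  rw [Finset.mul_sum, Finset.mul_sum, ← Finset.sum_sub_distrib, Finset.sum_div]
  refine Finset.sum_congr rfl fun i _ => ?_
  simp only [hessNegLog, Matrix.of_apply]
  field_simp

theorem IsHyperbolicPoly.localIP_self_pos (hp : IsHyperbolicPoly p e d) (hreg : IsRegularCone p e)
    (he' : e' ∈ hypConeOpen p e) {v : Fin n → ℝ} (hv : v ≠ 0) : 0 < localIP p e' v v := by
  have hpe' := hp.eval_ne_zero_of_mem_hypConeOpen he'
  obtain ⟨s, hs⟩ : ∃ s : ℝ, MvPolynomial.eval (e' + s • v) p = 0 := by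
    by_contra! hne
    refine hv ((Submodule.span_singleton_eq_bot (R := ℝ)).mp (hreg _ fun w hw => ?_))
    obtain ⟨a, rfl⟩ := Submodule.mem_span_singleton.mp hw
    exact hp.mem_hypConeClosed_of_forall_eval_ne_zero he' fun s => smul_smul s a v ▸ hne _
  rw [localIP_self_eq hpe']
  refine div_pos (laguerre_eval_pos ((hp.of_mem_hypConeOpen he').splits_lineRestrict v) ?_
    (r := s) ?_) (by positivity)
  · simpa [eval_lineRestrict] using hpe'
  · rw [IsRoot.def, eval_lineRestrict]
    exact hs

end LocalInnerProduct

section SecondOrderCone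

open Topology

variable {V W : Type*} [AddCommGroup V] [Module ℝ V] [AddCommGroup W] [Module ℝ W]
  {B : LinearMap.BilinForm ℝ V} {A : V →ₗ[ℝ] W} {c : V →ₗ[ℝ] ℝ} {e x y z : V} {b : W} {α : ℝ}

/-- The second-order cone `{x | α ‖x‖ ≤ ⟨e, x⟩}` around `e`, for the form `⟨u, v⟩ = B u v`, which
need not be symmetric, and `‖x‖ = (B x x)^{1/2}`. It abstracts `quadCone` from the Hessian. -/
def secondOrderCone (B : LinearMap.BilinForm ℝ V) (e : V) (α : ℝ) : Set V :=
  {x | α * √(B x x) ≤ B e x}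

theorem sqrt_self_add_lt_of_not_sameRay (hB : ∀ v, v ≠ 0 → 0 < B v v) (h : ¬ SameRay ℝ x y) :
    √(B (x + y) (x + y)) < √(B x x) + √(B y y) := by
  simp only [SameRay, not_or, not_exists, not_and] at h
  obtain ⟨hx, hy, hxy⟩ := h
  have ha := Real.sqrt_pos.mpr (hB x hx)
  have hb := Real.sqrt_pos.mpr (hB y hy)
  have hxx := Real.sq_sqrt (hB x hx).le
  have hyy := Real.sq_sqrt (hB y hy).le
  set a := √(B x x)
  set b := √(B y y)
  have hpos := hB (b • x - a • y) (sub_ne_zero.mpr (hxy b a hb ha))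
  simp only [map_sub, map_smul, LinearMap.sub_apply, LinearMap.smul_apply, smul_eq_mul,
    ← hxx, ← hyy] at hpos
  have hcauchySchwarz : B x y + B y x < 2 * (a * b) := by
    refine sub_pos.mp (pos_of_mul_pos_right (a := a * b) ?_ (mul_pos ha hb).le)
    linarith
  rw [Real.sqrt_lt' (add_pos ha hb)]
  simp only [map_add, LinearMap.add_apply]
  linarith

theorem smul_mem_secondOrderCone {r : ℝ} (hr : 0 ≤ r) (hx : x ∈ secondOrderCone B e α) :
    r • x ∈ secondOrderCone B e α := by
  have hsqrt : √(B (r • x) (r • x)) = r * √(B x x) := by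
    rw [map_smul, map_smul, LinearMap.smul_apply, smul_eq_mul, smul_eq_mul, ← mul_assoc,
      Real.sqrt_mul (mul_self_nonneg r), Real.sqrt_mul_self hr]
  have hx : α * √(B x x) ≤ B e x := hx
  change α * √(B (r • x) (r • x)) ≤ B e (r • x)
  rw [hsqrt, map_smul, smul_eq_mul, mul_left_comm]
  exact mul_le_mul_of_nonneg_left hx hr

theorem mul_sqrt_self_add_lt_of_not_sameRay (hB : ∀ v, v ≠ 0 → 0 < B v v) (hα : 0 < α)
    (hx : x ∈ secondOrderCone B e α) (hy : y ∈ secondOrderCone B e α) (h : ¬ SameRay ℝ x y) :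
    α * √(B (x + y) (x + y)) < B e (x + y) :=
  calc α * √(B (x + y) (x + y)) < α * (√(B x x) + √(B y y)) :=
        mul_lt_mul_of_pos_left (sqrt_self_add_lt_of_not_sameRay hB h) hα
    _ = α * √(B x x) + α * √(B y y) := mul_add _ _ _
    _ ≤ B e x + B e y := add_le_add hx hy
    _ = B e (x + y) := (map_add (B e) x y).symm

theorem eventually_add_smul_mem_secondOrderCone (hz : α * √(B z z) < B e z) (u : V) :
    ∀ᶠ t in 𝓝 (0 : ℝ), z + t • u ∈ secondOrderCone B e α := by
  have hleft : Continuous fun t : ℝ => α * √(B (z + t • u) (z + t • u)) := by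
    simp only [map_add, map_smul, LinearMap.add_apply, LinearMap.smul_apply]
    fun_prop
  have hright : Continuous fun t : ℝ => B e (z + t • u) := by
    simp only [map_add, map_smul]
    fun_prop
  exact (hleft.continuousAt.eventually_lt hright.continuousAt (by simpa using hz)).mono
    fun _ => le_of_lt

theorem ker_le_ker_of_isMinOn_secondOrderCone (hAz : A z = b) (hz : α * √(B z z) < B e z)
    (hmin : IsMinOn c (A ⁻¹' {b} ∩ secondOrderCone B e α) z) :
    LinearMap.ker A ≤ LinearMap.ker c := by
  intro u hu
  have hlocal : IsLocalMin (fun t : ℝ => c (z + t • u)) 0 := by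
    filter_upwards [eventually_add_smul_mem_secondOrderCone hz u] with t ht
    have hAt : A (z + t • u) = b := by
      rw [map_add, map_smul, LinearMap.mem_ker.mp hu, smul_zero, add_zero, hAz]
    simpa using isMinOn_iff.mp hmin _ ⟨hAt, ht⟩
  have hderiv : HasDerivAt (fun t : ℝ => c (z + t • u)) (c u) 0 := by
    simpa using ((hasDerivAt_id (0 : ℝ)).mul_const (c u)).const_add (c z)
  exact hlocal.hasDerivAt_eq_zero hderiv

theorem eq_of_sameRay_of_map_eq (h : SameRay ℝ x y) (hxy : A x = A y) (hx : A x ≠ 0) : x = y := by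
  obtain ⟨r, s, -, hs, hrs⟩ := h.exists_pos (fun h0 => hx (by rw [h0, map_zero]))
    (fun h0 => hx (by rw [hxy, h0, map_zero]))
  have hAr : r • A x = s • A x := by
    rw [← map_smul, hrs, map_smul, hxy]
  rw [smul_left_injective ℝ hx hAr] at hrs
  exact smul_right_injective V hs.ne' hrs

theorem eq_of_isMinOn_secondOrderCone (hB : ∀ v, v ≠ 0 → 0 < B v v) (hα : 0 < α) (hb : b ≠ 0)
    (hc : ¬ LinearMap.ker A ≤ LinearMap.ker c)
    (hx : x ∈ A ⁻¹' {b} ∩ secondOrderCone B e α) (hy : y ∈ A ⁻¹' {b} ∩ secondOrderCone B e α)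
    (hxmin : IsMinOn c (A ⁻¹' {b} ∩ secondOrderCone B e α) x)
    (hymin : IsMinOn c (A ⁻¹' {b} ∩ secondOrderCone B e α) y) : x = y := by
  have hAx : A x = b := hx.1
  have hAy : A y = b := hy.1
  by_contra hne
  have hray : ¬ SameRay ℝ ((1 / 2 : ℝ) • x) ((1 / 2 : ℝ) • y) := fun h =>
    hne <| eq_of_sameRay_of_map_eq
      (by simpa using (h.pos_smul_left (two_pos (α := ℝ))).pos_smul_right (two_pos (α := ℝ)))
      (hAx.trans hAy.symm) (hAx ▸ hb)
  have hhalf : (0 : ℝ) ≤ 1 / 2 := by norm_num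
  have hstrict := mul_sqrt_self_add_lt_of_not_sameRay hB hα
    (smul_mem_secondOrderCone hhalf hx.2) (smul_mem_secondOrderCone hhalf hy.2) hray
  have hcxy : c x = c y := (hxmin hy).antisymm (hymin hx)
  have hAmid : A ((1 / 2 : ℝ) • x + (1 / 2 : ℝ) • y) = b := by
    rw [map_add, map_smul, map_smul, hAx, hAy, ← add_smul, add_halves, one_smul]
  have hcmid : c ((1 / 2 : ℝ) • x + (1 / 2 : ℝ) • y) = c x := by
    rw [map_add, map_smul, map_smul, ← hcxy, ← add_smul, add_halves, one_smul]
  exact hc (ker_le_ker_of_isMinOn_secondOrderCone hAmid hstrict fun w hw =>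
    hcmid.trans_le (hxmin hw))

end SecondOrderCone

theorem exists_vecMul_eq_of_ker_le_ker {m n K : Type*} [Fintype m] [Fintype n] [Field K]
    {A : Matrix m n K} {c : n → K}
    (h : LinearMap.ker A.mulVecLin ≤ LinearMap.ker (dotProductBilin K K c)) :
    ∃ y, Matrix.vecMul y A = c := by
  have hle : ⨅ i, LinearMap.ker (dotProductBilin K K (A i)) ≤
      LinearMap.ker (dotProductBilin K K c) :=
    le_trans (fun u hu => funext fun i => (Submodule.mem_iInf _).mp hu i) h
  obtain ⟨y, hy⟩ := (Submodule.mem_span_range_iff_exists_fun K).mp (mem_span_of_iInf_ker_le_ker hle)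
  refine ⟨y, dotProduct_eq _ _ fun u => ?_⟩
  have hyu := LinearMap.congr_fun hy u
  rw [← Matrix.dotProduct_mulVec]
  simpa [dotProduct, Matrix.mulVec] using hyu

theorem quadCone_eq_secondOrderCone {n : ℕ} (p : MvPolynomial (Fin n) ℝ) (e' : Fin n → ℝ) (α : ℝ) :
    quadCone p e' α = secondOrderCone (Matrix.toLinearMap₂' ℝ (hessNegLog p e')) e' α := by
  simp only [quadCone, secondOrderCone, localNorm, localIP_eq_toLinearMap₂']

theorem stmt10_general {n m d : ℕ} (p : MvPolynomial (Fin n) ℝ) (e : Fin n → ℝ)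
    (hp : IsHyperbolicPoly p e d) (hreg : IsRegularCone p e)
    (A : Matrix (Fin m) (Fin n) ℝ) (b : Fin m → ℝ) (hb : b ≠ 0)
    (c : Fin n → ℝ) (hc : ¬ ∃ y : Fin m → ℝ, Matrix.vecMul y A = c) (α : ℝ) (hα : 0 < α)
    (e' : Fin n → ℝ) (he' : e' ∈ hypConeOpen p e) (x x' : Fin n → ℝ)
    (hxfeas : A.mulVec x = b ∧ x ∈ quadCone p e' α)
    (hxfeas' : A.mulVec x' = b ∧ x' ∈ quadCone p e' α)
    (hxopt : ∀ z : Fin n → ℝ, A.mulVec z = b → z ∈ quadCone p e' α →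
      (∑ i, c i * x i) ≤ ∑ i, c i * z i)
    (hxopt' : ∀ z : Fin n → ℝ, A.mulVec z = b → z ∈ quadCone p e' α →
      (∑ i, c i * x' i) ≤ ∑ i, c i * z i) :
    x = x' := by
  rw [quadCone_eq_secondOrderCone] at hxfeas hxfeas' hxopt hxopt'
  have hB : ∀ v, v ≠ 0 → 0 < Matrix.toLinearMap₂' ℝ (hessNegLog p e') v v := fun v hv =>
    localIP_eq_toLinearMap₂' p e' v v ▸ hp.localIP_self_pos hreg he' hv
  exact eq_of_isMinOn_secondOrderCone (A := A.mulVecLin) (c := dotProductBilin ℝ ℝ c) hB hα hb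
    (fun h => hc (exists_vecMul_eq_of_ker_le_ker h)) hxfeas hxfeas'
    (fun z hz => hxopt z hz.1 hz.2) (fun z hz => hxopt' z hz.1 hz.2)

/-- uniqueness of the optimal solution of `QP_{e'}(α)`.
Under the standing assumptions (`A` of full row rank, `b ≠ 0`, `c` not in the row space of `A`,
`Λ₊` regular), for `α ∈ (0,1)` and `e' ∈ Λ₊₊` with `Ae' = b`, the quadratic program
`min {⟨c, x⟩ : Ax = b, x ∈ K_{e'}(α)}` has at most one optimal solution. -/
theorem stmt10 {n m d : ℕ} (hd : 1 ≤ d) (p : MvPolynomial (Fin n) ℝ) (e : Fin n → ℝ)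
    (hp : IsHyperbolicPoly p e d) (hpe : 0 < MvPolynomial.eval e p)
    (hreg : IsRegularCone p e)
    (A : Matrix (Fin m) (Fin n) ℝ) (hA : A.rank = m)
    (b : Fin m → ℝ) (hb : b ≠ 0)
    (c : Fin n → ℝ) (hc : ¬ ∃ y : Fin m → ℝ, Matrix.vecMul y A = c)
    (α : ℝ) (hα : 0 < α) (hα1 : α < 1)
    (e' : Fin n → ℝ) (he' : e' ∈ hypConeOpen p e) (hAe : A.mulVec e' = b)
    (x x' : Fin n → ℝ)
    (hxfeas : A.mulVec x = b ∧ x ∈ quadCone p e' α)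
    (hxfeas' : A.mulVec x' = b ∧ x' ∈ quadCone p e' α)
    (hxopt : ∀ z : Fin n → ℝ, A.mulVec z = b → z ∈ quadCone p e' α →
      (∑ i, c i * x i) ≤ ∑ i, c i * z i)
    (hxopt' : ∀ z : Fin n → ℝ, A.mulVec z = b → z ∈ quadCone p e' α →
      (∑ i, c i * x' i) ≤ ∑ i, c i * z i) :
    x = x' :=
  stmt10_general p e hp hreg A b hb c hc α hα e' he' x x' hxfeas hxfeas' hxopt hxopt'
end

section
/- Fix 0 < α < 1 and a nonzero symmetric matrix X ∈ ℝ^{d×d} (d ≥ 2) with tr X = α·(tr(X²))^{1/2}; set S = (1/(d−α²))·(I − (α²/tr X)·X), q(t) = tr(((I+tX)S)²), E(t) = (1/(1+t))·(I+tX), and β = α·√((1+α)/2). Then q is a strictly convex quadratic polynomial whose minimizer t̄ satisfies t̄ > α/(2‖X‖_F), and setting δ = t̄ − α/(2‖X‖_F) > 0, for every t ∈ [t̄ − δ, t̄ + δ]: E(t) is positive definite and tr(SZ) > 0 for every nonzero Z ∈ K_{E(t)}(β). -/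
open scoped BigOperators

/-- The matrix quadratic cone
`K_E(β) = {Z symmetric : tr(E⁻¹Z) ≥ β (tr((E⁻¹Z)²))^{1/2}}` for a positive definite `E`. -/
noncomputable def matQuadCone {d : ℕ} (E : Matrix (Fin d) (Fin d) ℝ) (β : ℝ) :
    Set (Matrix (Fin d) (Fin d) ℝ) :=
  {Z | Z.IsSymm ∧ β * Real.sqrt ((E⁻¹ * Z * (E⁻¹ * Z)).trace) ≤ (E⁻¹ * Z).trace}

/-!
Put `N = X / ‖X‖_F`. The matrix `S` is the component of `I` orthogonal to `N`, scaled to trace one,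
so `tr((I + τN)S) = 1` for every `τ`, and `‖(I + τN)S‖²` is a quadratic in `τ`.

The circular cones of half-angles `arccos (β/√d)` and `arcsin (β/√d)` about `I` are dual to each
other. The congruence `Z ↦ E^{-1/2} Z E^{-1/2}` maps `K_E(β)` to the first one, so `S` is interior
to the dual of `K_E(β)` for `E = I + τN` as soon as `(d - β²) ‖(I + τN)S‖² < 1`. The quadratic is
symmetric about its minimizer, hence on the interval of the theorem it is largest at `τ = α/2`;
there the bounds `tr N³ ≤ 1` and `tr N⁴ ≤ 1` reduce the inequality to one in `α` and `d`.

Positive definiteness of `I + τN` needs no spectrum: testing against the rank one matrices `vvᵀ`,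
which lie in the cone with `β = 1`, shows that `S` and `(I + τN)S` are positive definite, and they
commute.
-/

open Matrix InnerProductGeometry
open scoped RealInnerProductSpace

section InnerProductSpace

variable {V : Type*} [NormedAddCommGroup V] [InnerProductSpace ℝ V]

lemma angle_le_arccos_of_mul_norm_le_inner {e z : V} {β : ℝ} (hz₀ : z ≠ 0)
    (he₀ : e ≠ 0) (hz : β * ‖z‖ ≤ ⟪e, z⟫) : angle e z ≤ Real.arccos (β / ‖e‖) := by
  have := norm_pos_iff.2 he₀
  have := norm_pos_iff.2 hz₀
  refine Real.antitone_arccos ?_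
  rw [div_le_div_iff₀ (by positivity) (by positivity)]
  calc β * (‖e‖ * ‖z‖) = β * ‖z‖ * ‖e‖ := by ring
    _ ≤ ⟪e, z⟫ * ‖e‖ := by gcongr

lemma angle_lt_arcsin_of_sqrt_mul_norm_lt_inner {e s : V} {β : ℝ} (hβ : 0 ≤ β)
    (hs : √(‖e‖ ^ 2 - β ^ 2) * ‖s‖ < ⟪e, s⟫) : angle e s < Real.arcsin (β / ‖e‖) := by
  have hinner : 0 < ⟪e, s⟫ := hs.trans_le' (by positivity)
  have he₀ : 0 < ‖e‖ := norm_pos_iff.2 fun h => by simp [h] at hinner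
  have hs₀ : 0 < ‖s‖ := norm_pos_iff.2 fun h => by simp [h] at hinner
  have hsqrt : √(1 - (β / ‖e‖) ^ 2) * ‖e‖ = √(‖e‖ ^ 2 - β ^ 2) := by
    rw [← Real.sqrt_sq he₀.le, ← Real.sqrt_mul' _ (sq_nonneg _), Real.sqrt_sq he₀.le]
    congr 1
    field_simp
  refine (Real.strictAntiOn_cos.lt_iff_gt
    ⟨Real.arcsin_nonneg.2 (by positivity),
      (Real.arcsin_le_pi_div_two _).trans (by linarith [Real.pi_pos])⟩
    ⟨angle_nonneg e s, angle_le_pi e s⟩).1 ?_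
  rw [Real.cos_arcsin, cos_angle, lt_div_iff₀ (by positivity), ← mul_assoc, hsqrt]
  exact hs

theorem inner_pos_of_mem_circular_cones {e s z : V} {β : ℝ} (hβ : 0 ≤ β)
    (hs : √(‖e‖ ^ 2 - β ^ 2) * ‖s‖ < ⟪e, s⟫) (hz : β * ‖z‖ ≤ ⟪e, z⟫) (hz₀ : z ≠ 0) :
    0 < ⟪s, z⟫ := by
  have hinner : 0 < ⟪e, s⟫ := hs.trans_le' (by positivity)
  have he₀ : e ≠ 0 := fun h => by simp [h] at hinner
  have hs₀ : s ≠ 0 := fun h => by simp [h] at hinner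
  have hangle : angle s z < Real.pi / 2 := calc
    angle s z ≤ angle s e + angle e z := angle_le_angle_add_angle s e z
    _ < Real.arcsin (β / ‖e‖) + Real.arccos (β / ‖e‖) := by
      rw [angle_comm s e]
      exact add_lt_add_of_lt_of_le (angle_lt_arcsin_of_sqrt_mul_norm_lt_inner hβ hs)
        (angle_le_arccos_of_mul_norm_le_inner hz₀ he₀ hz)
    _ = Real.pi / 2 := by rw [Real.arccos, add_sub_cancel]
  rw [← cos_angle_mul_norm_mul_norm s z]
  have := Real.cos_pos_of_mem_Ioo
    ⟨by linarith [angle_nonneg s z, Real.pi_pos], hangle⟩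
  positivity

/-- The parameter of the point closest to the origin on the line `t ↦ p + t • v`; it locates the
vertex of the quadratic `q`. For `v = 0` it has the junk value `0`. -/
noncomputable def lineArgmin (p v : V) : ℝ := -⟪p, v⟫ / ‖v‖ ^ 2

lemma norm_add_smul_sq_eq (p : V) {v : V} (hv : v ≠ 0) (t : ℝ) :
    ‖p + t • v‖ ^ 2 = ‖v‖ ^ 2 * (t - lineArgmin p v) ^ 2 + ‖p + lineArgmin p v • v‖ ^ 2 := by
  have hm : lineArgmin p v * ‖v‖ ^ 2 = -⟪p, v⟫ := div_mul_cancel₀ _ (by simpa using hv)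
  have hexp : ∀ r : ℝ, ‖p + r • v‖ ^ 2 = ‖p‖ ^ 2 + 2 * r * ⟪p, v⟫ + r ^ 2 * ‖v‖ ^ 2 := fun r => by
    rw [norm_add_sq_real, real_inner_smul_right, norm_smul, mul_pow, Real.norm_eq_abs, sq_abs]
    ring
  rw [hexp, hexp]
  linear_combination 2 * (t - lineArgmin p v) * hm

lemma norm_add_smul_le_norm_add_smul {p v : V} (hv : v ≠ 0) {t r : ℝ}
    (h : |t - lineArgmin p v| ≤ |r - lineArgmin p v|) : ‖p + t • v‖ ≤ ‖p + r • v‖ := by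
  rw [← sq_le_sq₀ (norm_nonneg _) (norm_nonneg _), norm_add_smul_sq_eq p hv,
    norm_add_smul_sq_eq p hv r]
  have := sq_le_sq.2 h
  gcongr

lemma lt_lineArgmin_of_inner_neg {p v : V} {t : ℝ} (h : ⟪p + t • v, v⟫ < 0) :
    t < lineArgmin p v := by
  have hv : 0 < ‖v‖ := norm_pos_iff.2 fun hv => by simp [hv] at h
  rw [inner_add_left, real_inner_smul_left, real_inner_self_eq_norm_sq] at h
  rw [lineArgmin, lt_div_iff₀ (by positivity)]
  linarith

end InnerProductSpace

open scoped ComplexOrder in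
theorem posDef_of_commute_of_posDef_mul {n 𝕜 : Type*} [Fintype n] [RCLike 𝕜]
    {A B : Matrix n n 𝕜} (hB : B.PosDef) (hcomm : Commute A B) (hAB : (A * B).PosDef) :
    A.PosDef := by
  classical
  open scoped MatrixOrder in
  have hdet : IsUnit B.det := (isUnit_iff_isUnit_det B).1 hB.isUnit
  have hA : A * B * B⁻¹ = A := mul_nonsing_inv_cancel_right B A hdet
  have hcomm' : Commute (A * B) B⁻¹ := by
    rw [Commute, SemiconjBy, hA, hcomm.eq, nonsing_inv_mul_cancel_left B A hdet]
  rw [← hA, ← isStrictlyPositive_iff_posDef]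
  exact (IsStrictlyPositive.commute_iff hAB.isStrictlyPositive
    hB.inv.isStrictlyPositive).1 hcomm'

lemma mul_lt_sq_sub_sq {α D : ℝ} (hα₀ : 0 < α) (hα₁ : α < 1) (hD : 1 ≤ D) :
    (D - α ^ 2 * ((1 + α) / 2)) * (D - 7 / 4 * α ^ 2 + α ^ 3 / 2 + α ^ 4 / 4)
      < (D - α ^ 2) ^ 2 := by
  have hfactor : 0 < 2 * D * (1 + α) + α ^ 2 * (1 - 4 * α - α ^ 2) := calc
    0 < 2 * (1 - α ^ 3) + 2 * α * (1 - α ^ 2) + α ^ 2 * (1 - α ^ 2) := by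
      have : α ^ 2 < 1 := pow_lt_one₀ hα₀.le hα₁ two_ne_zero
      have : α ^ 3 < 1 := pow_lt_one₀ hα₀.le hα₁ three_ne_zero
      have : 0 < 1 - α ^ 2 := by linarith
      have : 0 < 1 - α ^ 3 := by linarith
      positivity
    _ = 2 * 1 * (1 + α) + α ^ 2 * (1 - 4 * α - α ^ 2) := by ring
    _ ≤ 2 * D * (1 + α) + α ^ 2 * (1 - 4 * α - α ^ 2) := by gcongr
  have hdiff : (D - α ^ 2) ^ 2
      - (D - α ^ 2 * ((1 + α) / 2)) * (D - 7 / 4 * α ^ 2 + α ^ 3 / 2 + α ^ 4 / 4)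
      = α ^ 2 / 8 * (1 - α) * (2 * D * (1 + α) + α ^ 2 * (1 - 4 * α - α ^ 2)) := by ring
  rw [← sub_pos, hdiff]
  exact mul_pos (mul_pos (by positivity) (sub_pos.2 hα₁)) hfactor

lemma abs_mul_sub_le_of_mem_Icc {n m δ t : ℝ} (hn : 0 < n)
    (ht : t ∈ Set.Icc (m / n - δ) (m / n + δ)) : |t * n - m| ≤ δ * n := by
  calc |t * n - m| = |m / n - t| * n := by
        rw [abs_sub_comm, ← abs_of_pos hn, ← abs_mul, abs_of_pos hn, sub_mul,
          div_mul_cancel₀ m hn.ne']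
    _ ≤ δ * n := by gcongr; exact Set.mem_Icc_iff_abs_le.2 ht

section Frobenius

open scoped Matrix.Norms.Frobenius

variable {n : Type*} [Fintype n]

/-- The trace inner product `⟪A, B⟫ = tr(AᵀB)` on real matrices, which makes the circular cones of
an inner product space available for the Frobenius norm. -/
noncomputable abbrev frobeniusInnerProductSpace :
    InnerProductSpace ℝ (Matrix n n ℝ) where
  inner A B := (Aᵀ * B).trace
  norm_sq_eq_re_inner A := by
    rw [frobenius_norm_def, ← Real.sqrt_eq_rpow, Real.sq_sqrt (by positivity), Finset.sum_comm]
    simp [trace, mul_apply, sq]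
  conj_inner_symm A B := by
    simpa using (trace_transpose (Bᵀ * A)).symm
  add_left A B C := by simp [add_mul]
  smul_left A B r := by simp

attribute [local instance] frobeniusInnerProductSpace

lemma inner_eq_trace_transpose_mul (A B : Matrix n n ℝ) : ⟪A, B⟫ = (Aᵀ * B).trace := rfl

lemma norm_sq_eq_trace_mul_self {A : Matrix n n ℝ} (hA : A.IsSymm) :
    ‖A‖ ^ 2 = (A * A).trace := by
  rw [← real_inner_self_eq_norm_sq, inner_eq_trace_transpose_mul, hA.eq]

lemma norm_eq_sqrt_trace_mul_self {A : Matrix n n ℝ} (hA : A.IsSymm) :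
    ‖A‖ = √(A * A).trace := by
  rw [← norm_sq_eq_trace_mul_self hA, Real.sqrt_sq (norm_nonneg A)]

lemma sqrt_trace_mul_self_pos {A : Matrix n n ℝ} (hA : A.IsSymm) (hA₀ : A ≠ 0) :
    0 < √(A * A).trace := by
  rwa [← norm_eq_sqrt_trace_mul_self hA, norm_pos_iff]

lemma trace_inv_sqrt_smul_mul_self {A : Matrix n n ℝ} (hA : 0 < √(A * A).trace) :
    ((√(A * A).trace)⁻¹ • A * (√(A * A).trace)⁻¹ • A).trace = 1 := by
  have htr : 0 < (A * A).trace := Real.sqrt_pos.1 hA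
  rw [smul_mul_smul_comm, trace_smul, smul_eq_mul, ← mul_inv, Real.mul_self_sqrt htr.le,
    inv_mul_cancel₀ htr.ne']

lemma norm_vecMulVec_self (v : n → ℝ) : ‖vecMulVec v v‖ = v ⬝ᵥ v := by
  rw [norm_eq_sqrt_trace_mul_self (transpose_vecMulVec v v), vecMulVec_mul_vecMulVec,
    trace_vecMulVec, dotProduct_smul, smul_eq_mul,
    Real.sqrt_mul_self (by simpa using dotProduct_star_self_nonneg v)]

lemma trace_mul_mul_transpose (C A : Matrix n n ℝ) :
    (C * A * Cᵀ).trace = (Cᵀ * C * A).trace := by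
  rw [trace_mul_comm, mul_assoc]

lemma isSymm_mul_mul_transpose (C : Matrix n n ℝ) {A : Matrix n n ℝ} (hA : A.IsSymm) :
    (C * A * Cᵀ).IsSymm := by
  rw [IsSymm, transpose_mul, transpose_mul, transpose_transpose, hA.eq, mul_assoc]

lemma norm_mul_mul_transpose (C : Matrix n n ℝ) {A : Matrix n n ℝ} (hA : A.IsSymm) :
    ‖C * A * Cᵀ‖ = √(Cᵀ * C * A * (Cᵀ * C * A)).trace := by
  rw [norm_eq_sqrt_trace_mul_self (isSymm_mul_mul_transpose C hA)]
  congr 1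
  simpa only [mul_assoc] using trace_mul_mul_transpose C (A * Cᵀ * C * A)

lemma one_le_card_of_norm_eq_one {N : Matrix n n ℝ} (hN₁ : ‖N‖ = 1) :
    (1 : ℝ) ≤ Fintype.card n := by
  refine Nat.one_le_cast.2 (Fintype.card_pos_iff.2 (not_isEmpty_iff.1 fun _ => ?_))
  simp [Subsingleton.elim N 0] at hN₁

lemma trace_cube_le_one {N : Matrix n n ℝ} (hN : N.IsSymm) (hN₁ : ‖N‖ = 1) :
    (N * (N * N)).trace ≤ 1 := by
  calc (N * (N * N)).trace = ⟪N, N * N⟫ := by rw [inner_eq_trace_transpose_mul, hN.eq]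
    _ ≤ ‖N‖ * ‖N * N‖ := real_inner_le_norm _ _
    _ ≤ ‖N‖ * (‖N‖ * ‖N‖) := by gcongr; exact frobenius_norm_mul N N
    _ = 1 := by rw [hN₁, mul_one, mul_one]

lemma trace_fourth_le_one {N : Matrix n n ℝ} (hN : N.IsSymm) (hN₁ : ‖N‖ = 1) :
    (N * N * (N * N)).trace ≤ 1 := by
  have hNN : (N * N).IsSymm := by rw [IsSymm, transpose_mul, hN.eq]
  calc (N * N * (N * N)).trace = ‖N * N‖ ^ 2 := (norm_sq_eq_trace_mul_self hNN).symm
    _ ≤ (‖N‖ * ‖N‖) ^ 2 := by gcongr; exact frobenius_norm_mul N N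
    _ = 1 := by rw [hN₁, mul_one, one_pow]

lemma inner_one_eq_trace [DecidableEq n] (A : Matrix n n ℝ) :
    ⟪(1 : Matrix n n ℝ), A⟫ = A.trace := by
  rw [inner_eq_trace_transpose_mul, transpose_one, one_mul]

lemma norm_one_sq_eq_card [DecidableEq n] : ‖(1 : Matrix n n ℝ)‖ ^ 2 = Fintype.card n := by
  rw [norm_sq_eq_trace_mul_self isSymm_one, mul_one, trace_one]

theorem trace_mul_pos_of_trace_cones {A B : Matrix n n ℝ} {β : ℝ} (hβ : 0 ≤ β) (hA : A.IsSymm)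
    (hAtr : √(Fintype.card n - β ^ 2) * ‖A‖ < A.trace) (hBtr : β * ‖B‖ ≤ B.trace) (hB : B ≠ 0) :
    0 < (A * B).trace := by
  classical
  rw [← norm_one_sq_eq_card, ← inner_one_eq_trace] at hAtr
  rw [← inner_one_eq_trace] at hBtr
  simpa only [inner_eq_trace_transpose_mul, hA.eq] using
    inner_pos_of_mem_circular_cones hβ hAtr hBtr hB

theorem posDef_of_sqrt_mul_norm_lt_trace {A : Matrix n n ℝ} (hA : A.IsSymm)
    (h : √(Fintype.card n - 1) * ‖A‖ < A.trace) : A.PosDef := by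
  refine PosDef.of_dotProduct_mulVec_pos hA fun v hv => ?_
  have hv₀ : vecMulVec v v ≠ 0 := by simpa [vecMulVec_eq_zero] using hv
  have := trace_mul_pos_of_trace_cones zero_le_one hA (by simpa using h)
    (by rw [one_mul, norm_vecMulVec_self, trace_vecMulVec]) hv₀
  rwa [mul_vecMulVec, trace_vecMulVec, dotProduct_comm] at this

theorem trace_mul_pos_of_mem_matQuadCone {d : ℕ} {E S Z : Matrix (Fin d) (Fin d) ℝ} {β : ℝ}
    (hβ : 0 ≤ β) (hE : E.PosDef) (hS : S.IsSymm)
    (hES : √(d - β ^ 2) * √(E * S * (E * S)).trace < (E * S).trace)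
    (hZ : Z ∈ matQuadCone E β) (hZ₀ : Z ≠ 0) : 0 < (S * Z).trace := by
  obtain ⟨B, hB, hEB⟩ : ∃ B : Matrix (Fin d) (Fin d) ℝ, IsUnit B ∧ E = Bᵀ * B := by
    open scoped MatrixOrder in
    exact CStarAlgebra.isStrictlyPositive_iff_eq_star_mul_self.1 hE.isStrictlyPositive
  have hdet : IsUnit B.det := (isUnit_iff_isUnit_det B).1 hB
  have hEinv : E⁻¹ = (B⁻¹ᵀ)ᵀ * B⁻¹ᵀ := by
    rw [hEB, Matrix.mul_inv_rev, transpose_transpose, transpose_nonsing_inv]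
  obtain ⟨hZsymm, hZtr⟩ := hZ
  have htrS : (B * S * Bᵀ).trace = (E * S).trace := by rw [hEB, trace_mul_mul_transpose]
  have htrZ : (B⁻¹ᵀ * Z * B⁻¹).trace = (E⁻¹ * Z).trace := by
    rw [hEinv, ← trace_mul_mul_transpose, transpose_transpose]
  have hnormS : ‖B * S * Bᵀ‖ = √(E * S * (E * S)).trace := by
    rw [hEB, norm_mul_mul_transpose B hS]
  have hnormZ : ‖B⁻¹ᵀ * Z * B⁻¹‖ = √(E⁻¹ * Z * (E⁻¹ * Z)).trace := by
    rw [hEinv, ← norm_mul_mul_transpose _ hZsymm, transpose_transpose]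
  have hBinv : B⁻¹ * B = 1 := nonsing_inv_mul B hdet
  have hBtr : Bᵀ * B⁻¹ᵀ = 1 := by rw [← transpose_mul, hBinv, transpose_one]
  have hprod : (B * S * Bᵀ * (B⁻¹ᵀ * Z * B⁻¹)).trace = (S * Z).trace := by
    calc (B * S * Bᵀ * (B⁻¹ᵀ * Z * B⁻¹)).trace
        = (B * (S * (Bᵀ * B⁻¹ᵀ) * Z * B⁻¹)).trace := by simp only [mul_assoc]
      _ = (S * Z).trace := by rw [hBtr, mul_one, trace_mul_comm, mul_assoc, hBinv, mul_one]
  have hZ'₀ : B⁻¹ᵀ * Z * B⁻¹ ≠ 0 := fun h => hZ₀ <| calc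
    Z = Bᵀ * B⁻¹ᵀ * Z * (B⁻¹ * B) := by rw [hBtr, hBinv, one_mul, mul_one]
    _ = Bᵀ * (B⁻¹ᵀ * Z * B⁻¹) * B := by simp only [mul_assoc]
    _ = 0 := by rw [h, mul_zero, zero_mul]
  rw [← hprod]
  exact trace_mul_pos_of_trace_cones hβ (isSymm_mul_mul_transpose B hS)
    (by rwa [Fintype.card_fin, hnormS, htrS]) (by rwa [hnormZ, htrZ]) hZ'₀

section DualPoint

variable [DecidableEq n] {N : Matrix n n ℝ} {α : ℝ}

/-- The matrix `S` of the theorem in terms of `N = X / ‖X‖_F`, where `tr N = α`: the component of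
the identity orthogonal to `N`, scaled to have trace one. -/
noncomputable def dualPoint (α : ℝ) (N : Matrix n n ℝ) : Matrix n n ℝ :=
  (Fintype.card n - α ^ 2 : ℝ)⁻¹ • (1 - α • N)

lemma commute_dualPoint : Commute N (dualPoint α N) := by
  unfold dualPoint
  exact ((Commute.one_right N).sub_right ((Commute.refl N).smul_right α)).smul_right _

lemma isSymm_dualPoint (hN : N.IsSymm) : (dualPoint α N).IsSymm :=
  (isSymm_one.sub (hN.smul α)).smul _

lemma isSymm_mul_dualPoint (hN : N.IsSymm) : (N * dualPoint α N).IsSymm := by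
  rw [IsSymm, transpose_mul, (isSymm_dualPoint hN).eq, hN.eq, commute_dualPoint.eq]

lemma trace_mul_dualPoint (A : Matrix n n ℝ) :
    (A * dualPoint α N).trace
      = (Fintype.card n - α ^ 2 : ℝ)⁻¹ * (A.trace - α * (A * N).trace) := by
  rw [dualPoint, mul_smul_comm, mul_sub, mul_one, mul_smul_comm, trace_smul, trace_sub, trace_smul,
    smul_eq_mul, smul_eq_mul]

lemma trace_dualPoint (hα : α ^ 2 < Fintype.card n) (htr : N.trace = α) :
    (dualPoint α N).trace = 1 := by
  rw [← one_mul (dualPoint α N), trace_mul_dualPoint, trace_one, one_mul, htr, ← sq,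
    inv_mul_cancel₀ (sub_pos.2 hα).ne']

lemma trace_mul_dualPoint_self (hN : N.IsSymm) (hN₁ : ‖N‖ = 1) (htr : N.trace = α) :
    (N * dualPoint α N).trace = 0 := by
  rw [trace_mul_dualPoint, htr, ← norm_sq_eq_trace_mul_self hN, hN₁, one_pow, mul_one, sub_self,
    mul_zero]

lemma norm_dualPoint_sq (hN : N.IsSymm) (hN₁ : ‖N‖ = 1) (htr : N.trace = α)
    (hα : α ^ 2 < Fintype.card n) :
    ‖dualPoint α N‖ ^ 2 = (Fintype.card n - α ^ 2 : ℝ)⁻¹ := by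
  rw [norm_sq_eq_trace_mul_self (isSymm_dualPoint hN), trace_mul_dualPoint, trace_dualPoint hα htr,
    ← commute_dualPoint.eq, trace_mul_dualPoint_self hN hN₁ htr, mul_zero, sub_zero, mul_one]

lemma trace_sq_mul_dualPoint (hN : N.IsSymm) (hN₁ : ‖N‖ = 1) :
    (N * N * dualPoint α N).trace
      = (Fintype.card n - α ^ 2 : ℝ)⁻¹ * (1 - α * (N * (N * N)).trace) := by
  rw [trace_mul_dualPoint, ← norm_sq_eq_trace_mul_self hN, hN₁, one_pow, mul_assoc]

lemma inner_dualPoint_mul (hN : N.IsSymm) (hN₁ : ‖N‖ = 1) (htr : N.trace = α) :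
    ⟪dualPoint α N, N * dualPoint α N⟫
      = -((Fintype.card n - α ^ 2 : ℝ)⁻¹ ^ 2 * α * (1 - α * (N * (N * N)).trace)) := by
  have hcube : (N * dualPoint α N * N).trace = (N * N * dualPoint α N).trace := by
    rw [mul_assoc, ← commute_dualPoint.eq, ← mul_assoc]
  rw [inner_eq_trace_transpose_mul, (isSymm_dualPoint hN).eq, trace_mul_comm, trace_mul_dualPoint,
    trace_mul_dualPoint_self hN hN₁ htr, hcube, trace_sq_mul_dualPoint hN hN₁]
  ring

lemma norm_mul_dualPoint_sq (hN : N.IsSymm) (hN₁ : ‖N‖ = 1) :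
    ‖N * dualPoint α N‖ ^ 2 = (Fintype.card n - α ^ 2 : ℝ)⁻¹ ^ 2 *
      (1 - 2 * α * (N * (N * N)).trace + α ^ 2 * (N * N * (N * N)).trace) := by
  have hSN : dualPoint α N * N = N * dualPoint α N := commute_dualPoint.eq.symm
  have hsq : N * dualPoint α N * N = N * N * dualPoint α N := by
    rw [mul_assoc, hSN, ← mul_assoc]
  have hcube : N * N * dualPoint α N * N = N * (N * N) * dualPoint α N := by
    rw [mul_assoc, hSN, ← mul_assoc, mul_assoc N N N]
  have hfourth : N * (N * N) * N = N * N * (N * N) := by simp only [mul_assoc]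
  rw [norm_sq_eq_trace_mul_self (isSymm_mul_dualPoint hN), ← mul_assoc, trace_mul_dualPoint,
    hsq, hcube, trace_sq_mul_dualPoint hN hN₁, trace_mul_dualPoint, hfourth]
  ring

lemma inner_dualPoint_add_half_neg (hN : N.IsSymm) (hN₁ : ‖N‖ = 1) (htr : N.trace = α)
    (hα₀ : 0 < α) (hα₁ : α < 1) :
    ⟪dualPoint α N + (α / 2) • (N * dualPoint α N), N * dualPoint α N⟫ < 0 := by
  have hα₂ : α ^ 2 < 1 := pow_lt_one₀ hα₀.le hα₁ two_ne_zero
  have hα := hα₂.trans_le (one_le_card_of_norm_eq_one hN₁)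
  have hfourth : α ^ 2 * (N * N * (N * N)).trace < 1 := calc
    α ^ 2 * (N * N * (N * N)).trace ≤ α ^ 2 * 1 := by gcongr; exact trace_fourth_le_one hN hN₁
    _ < 1 := by rwa [mul_one]
  have : 0 < (Fintype.card n - α ^ 2 : ℝ)⁻¹ := inv_pos.2 (sub_pos.2 hα)
  rw [inner_add_left, real_inner_smul_left, real_inner_self_eq_norm_sq,
    inner_dualPoint_mul hN hN₁ htr, norm_mul_dualPoint_sq hN hN₁]
  have hgap : 0 < (Fintype.card n - α ^ 2 : ℝ)⁻¹ ^ 2 * (α / 2) *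
      (1 - α ^ 2 * (N * N * (N * N)).trace) := mul_pos (by positivity) (sub_pos.2 hfourth)
  linarith

lemma norm_dualPoint_add_half_sq_le (hN : N.IsSymm) (hN₁ : ‖N‖ = 1) (htr : N.trace = α)
    (hα₀ : 0 < α) (hα : α ^ 2 < Fintype.card n) :
    ‖dualPoint α N + (α / 2) • (N * dualPoint α N)‖ ^ 2 ≤ (Fintype.card n - α ^ 2 : ℝ)⁻¹ ^ 2 *
      (Fintype.card n - 7 / 4 * α ^ 2 + α ^ 3 / 2 + α ^ 4 / 4) := by
  have hκ : (Fintype.card n - α ^ 2 : ℝ)⁻¹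
      = (Fintype.card n - α ^ 2 : ℝ)⁻¹ ^ 2 * (Fintype.card n - α ^ 2) := by
    have := (sub_pos.2 hα).ne'
    field_simp
  calc ‖dualPoint α N + (α / 2) • (N * dualPoint α N)‖ ^ 2
      = (Fintype.card n - α ^ 2 : ℝ)⁻¹ ^ 2 * (Fintype.card n - 7 / 4 * α ^ 2
          + α ^ 3 / 2 * (N * (N * N)).trace + α ^ 4 / 4 * (N * N * (N * N)).trace) := by
        rw [norm_add_sq_real, real_inner_smul_right, norm_smul, mul_pow, Real.norm_eq_abs, sq_abs,
          norm_dualPoint_sq hN hN₁ htr hα, inner_dualPoint_mul hN hN₁ htr,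
          norm_mul_dualPoint_sq hN hN₁]
        linear_combination hκ
    _ ≤ (Fintype.card n - α ^ 2 : ℝ)⁻¹ ^ 2 * (Fintype.card n - 7 / 4 * α ^ 2
          + α ^ 3 / 2 * 1 + α ^ 4 / 4 * 1) := by
        gcongr
        · exact trace_cube_le_one hN hN₁
        · exact trace_fourth_le_one hN hN₁
    _ = _ := by rw [mul_one, mul_one]

lemma sqrt_mul_norm_dualPoint_add_half_lt_one (hN : N.IsSymm) (hN₁ : ‖N‖ = 1)
    (htr : N.trace = α) (hα₀ : 0 < α) (hα₁ : α < 1) {β : ℝ} (hβ : β ^ 2 = α ^ 2 * ((1 + α) / 2)) :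
    √(Fintype.card n - β ^ 2) * ‖dualPoint α N + (α / 2) • (N * dualPoint α N)‖ < 1 := by
  have hcard : (1 : ℝ) ≤ Fintype.card n := one_le_card_of_norm_eq_one hN₁
  have hα : α ^ 2 < Fintype.card n := (pow_lt_one₀ hα₀.le hα₁ two_ne_zero).trans_le hcard
  have hβcard : 0 ≤ Fintype.card n - β ^ 2 := by rw [hβ]; nlinarith
  rw [← sq_lt_one_iff₀ (by positivity), mul_pow, Real.sq_sqrt hβcard]
  calc (Fintype.card n - β ^ 2) * ‖dualPoint α N + (α / 2) • (N * dualPoint α N)‖ ^ 2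
      ≤ (Fintype.card n - β ^ 2) * ((Fintype.card n - α ^ 2 : ℝ)⁻¹ ^ 2 *
          (Fintype.card n - 7 / 4 * α ^ 2 + α ^ 3 / 2 + α ^ 4 / 4)) := by
        gcongr
        exact norm_dualPoint_add_half_sq_le hN hN₁ htr hα₀ hα
    _ = (Fintype.card n - α ^ 2 : ℝ)⁻¹ ^ 2 * ((Fintype.card n - α ^ 2 * ((1 + α) / 2)) *
          (Fintype.card n - 7 / 4 * α ^ 2 + α ^ 3 / 2 + α ^ 4 / 4)) := by rw [hβ]; ring
    _ < (Fintype.card n - α ^ 2 : ℝ)⁻¹ ^ 2 * (Fintype.card n - α ^ 2) ^ 2 := by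
        have := sub_pos.2 hα
        gcongr
        exact mul_lt_sq_sub_sq hα₀ hα₁ hcard
    _ = 1 := by rw [← mul_pow, inv_mul_cancel₀ (sub_pos.2 hα).ne', one_pow]

lemma posDef_dualPoint (hN : N.IsSymm) (hN₁ : ‖N‖ = 1) (htr : N.trace = α)
    (hα₂ : α ^ 2 < 1) : (dualPoint α N).PosDef := by
  have hα := hα₂.trans_le (one_le_card_of_norm_eq_one hN₁)
  refine posDef_of_sqrt_mul_norm_lt_trace (isSymm_dualPoint hN) ?_
  rw [← Real.sqrt_sq (norm_nonneg (dualPoint α N)), norm_dualPoint_sq hN hN₁ htr hα,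
    trace_dualPoint hα htr, ← Real.sqrt_mul' _ (inv_pos.2 (sub_pos.2 hα)).le, Real.sqrt_lt' one_pos,
    one_pow, ← div_eq_mul_inv, div_lt_one (sub_pos.2 hα)]
  linarith

lemma one_add_smul_mul_dualPoint (τ : ℝ) :
    (1 + τ • N) * dualPoint α N = dualPoint α N + τ • (N * dualPoint α N) := by
  rw [add_mul, one_mul, smul_mul_assoc]

lemma isSymm_one_add_smul_mul_dualPoint (hN : N.IsSymm) (τ : ℝ) :
    ((1 + τ • N) * dualPoint α N).IsSymm := by
  rw [one_add_smul_mul_dualPoint]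
  exact (isSymm_dualPoint hN).add ((isSymm_mul_dualPoint hN).smul τ)

lemma trace_one_add_smul_mul_dualPoint (hN : N.IsSymm) (hN₁ : ‖N‖ = 1) (htr : N.trace = α)
    (hα : α ^ 2 < Fintype.card n) (τ : ℝ) : ((1 + τ • N) * dualPoint α N).trace = 1 := by
  rw [one_add_smul_mul_dualPoint, trace_add, trace_smul, trace_dualPoint hα htr,
    trace_mul_dualPoint_self hN hN₁ htr, smul_zero, add_zero]

lemma posDef_one_add_smul (hN : N.IsSymm) (hN₁ : ‖N‖ = 1) (htr : N.trace = α)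
    (hα₂ : α ^ 2 < 1) {τ : ℝ}
    (hτ : √(Fintype.card n - 1) * ‖(1 + τ • N) * dualPoint α N‖ < 1) : (1 + τ • N).PosDef := by
  have hα := hα₂.trans_le (one_le_card_of_norm_eq_one hN₁)
  refine posDef_of_commute_of_posDef_mul (posDef_dualPoint hN hN₁ htr hα₂)
    ((Commute.one_left _).add_left (commute_dualPoint.smul_left τ))
    (posDef_of_sqrt_mul_norm_lt_trace (isSymm_one_add_smul_mul_dualPoint hN τ) ?_)
  rwa [trace_one_add_smul_mul_dualPoint hN hN₁ htr hα]

lemma mul_dualPoint_ne_zero (hN : N.IsSymm) (hN₁ : ‖N‖ = 1) (htr : N.trace = α)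
    (hα₀ : 0 < α) (hα₁ : α < 1) : N * dualPoint α N ≠ 0 :=
  fun h => by simpa [h] using inner_dualPoint_add_half_neg hN hN₁ htr hα₀ hα₁

lemma half_lt_lineArgmin_dualPoint (hN : N.IsSymm) (hN₁ : ‖N‖ = 1) (htr : N.trace = α)
    (hα₀ : 0 < α) (hα₁ : α < 1) :
    α / 2 < lineArgmin (dualPoint α N) (N * dualPoint α N) :=
  lt_lineArgmin_of_inner_neg (inner_dualPoint_add_half_neg hN hN₁ htr hα₀ hα₁)

lemma sqrt_mul_norm_one_add_smul_mul_dualPoint_lt_one (hN : N.IsSymm)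
    (hN₁ : ‖N‖ = 1) (htr : N.trace = α) (hα₀ : 0 < α) (hα₁ : α < 1) {β : ℝ}
    (hβ : β ^ 2 = α ^ 2 * ((1 + α) / 2)) {τ : ℝ}
    (hτ : |τ - lineArgmin (dualPoint α N) (N * dualPoint α N)|
      ≤ lineArgmin (dualPoint α N) (N * dualPoint α N) - α / 2) :
    √(Fintype.card n - β ^ 2) * ‖(1 + τ • N) * dualPoint α N‖ < 1 := by
  have hNS := mul_dualPoint_ne_zero hN hN₁ htr hα₀ hα₁
  have hle : ‖(1 + τ • N) * dualPoint α N‖ ≤ ‖dualPoint α N + (α / 2) • (N * dualPoint α N)‖ := by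
    rw [one_add_smul_mul_dualPoint]
    refine norm_add_smul_le_norm_add_smul hNS (hτ.trans ?_)
    rw [abs_sub_comm]
    exact le_abs_self _
  exact (mul_le_mul_of_nonneg_left hle (Real.sqrt_nonneg _)).trans_lt
    (sqrt_mul_norm_dualPoint_add_half_lt_one hN hN₁ htr hα₀ hα₁ hβ)

end DualPoint

lemma matQuadCone_smul {d : ℕ} {E : Matrix (Fin d) (Fin d) ℝ} (hE : IsUnit E.det) (β : ℝ) {r : ℝ}
    (hr : 0 < r) : matQuadCone (r • E) β = matQuadCone E β := by
  have hinv : (r • E)⁻¹ = r⁻¹ • E⁻¹ := by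
    simpa [Units.smul_def] using inv_smul' E (Units.mk0 r hr.ne') hE
  ext Z
  simp only [matQuadCone, Set.mem_ofPred_eq, hinv, smul_mul_assoc, mul_smul_comm, trace_smul,
    smul_eq_mul]
  rw [← mul_assoc, Real.sqrt_mul (mul_self_nonneg _), Real.sqrt_mul_self (by positivity),
    mul_left_comm, mul_le_mul_iff_right₀ (by positivity)]

theorem exists_vertex_form_and_dual_cone {d : ℕ} {α : ℝ} (hα₀ : 0 < α) (hα₁ : α < 1)
    {N : Matrix (Fin d) (Fin d) ℝ} (hN : N.IsSymm) (hNN : (N * N).trace = 1) (htr : N.trace = α) :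
    ∃ a c m : ℝ, 0 < a ∧ α / 2 < m ∧
      (∀ τ : ℝ, ((1 + τ • N) * dualPoint α N * ((1 + τ • N) * dualPoint α N)).trace
        = a * (τ - m) ^ 2 + c) ∧
      ∀ τ : ℝ, |τ - m| ≤ m - α / 2 → (1 + τ • N).PosDef ∧
        ∀ Z ∈ matQuadCone (1 + τ • N) (α * √((1 + α) / 2)), Z ≠ 0 →
          0 < (dualPoint α N * Z).trace := by
  have hN₁ : ‖N‖ = 1 := by rw [norm_eq_sqrt_trace_mul_self hN, hNN, Real.sqrt_one]
  have hα₂ : α ^ 2 < 1 := pow_lt_one₀ hα₀.le hα₁ two_ne_zero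
  have hα := hα₂.trans_le (one_le_card_of_norm_eq_one hN₁)
  set β := α * √((1 + α) / 2)
  have hβ : β ^ 2 = α ^ 2 * ((1 + α) / 2) := by rw [mul_pow, Real.sq_sqrt (by positivity)]
  have hβ₁ : β ^ 2 ≤ 1 := by rw [hβ]; exact mul_le_one₀ hα₂.le (by positivity) (by linarith)
  have hsymm := isSymm_one_add_smul_mul_dualPoint (α := α) hN
  have hNS := mul_dualPoint_ne_zero hN hN₁ htr hα₀ hα₁
  set m := lineArgmin (dualPoint α N) (N * dualPoint α N)
  refine ⟨‖N * dualPoint α N‖ ^ 2, ‖dualPoint α N + m • (N * dualPoint α N)‖ ^ 2, m,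
    by positivity, half_lt_lineArgmin_dualPoint hN hN₁ htr hα₀ hα₁, fun τ => ?_, fun τ hτ => ?_⟩
  · rw [← norm_sq_eq_trace_mul_self (hsymm τ), one_add_smul_mul_dualPoint,
      norm_add_smul_sq_eq _ hNS]
  · have hdual := sqrt_mul_norm_one_add_smul_mul_dualPoint_lt_one hN hN₁ htr hα₀ hα₁ hβ hτ
    have hpos : (1 + τ • N).PosDef :=
      posDef_one_add_smul hN hN₁ htr hα₂ (hdual.trans_le' (by gcongr))
    refine ⟨hpos, fun Z hZ hZ₀ =>
      trace_mul_pos_of_mem_matQuadCone (by positivity) hpos (isSymm_dualPoint hN) ?_ hZ hZ₀⟩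
    rw [← norm_eq_sqrt_trace_mul_self (hsymm τ), trace_one_add_smul_mul_dualPoint hN hN₁ htr hα]
    rwa [Fintype.card_fin] at hdual

end Frobenius

/-- Proposition 10.3 in RS14.
With `X`, `S`, `q(t) = tr(((I+tX)S)²)`, `E(t) = (1/(1+t))(I+tX)` and `β = α√((1+α)/2)`:
`q` is a strictly convex quadratic whose (strict, global) minimizer `t̄` satisfies
`t̄ > α/(2‖X‖_F)`, and with `δ = t̄ - α/(2‖X‖_F)`, for every `t ∈ [t̄-δ, t̄+δ]`,
`E(t) ≻ 0` and `S ∈ int(K_{E(t)}(β)*)`, i.e. `tr(SZ) > 0` for every nonzero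
`Z ∈ K_{E(t)}(β)`.  (Here `‖X‖_F = (tr X²)^{1/2}`.) -/
theorem stmt14 {d : ℕ} (hd : 2 ≤ d) (α : ℝ) (hα : 0 < α) (hα1 : α < 1)
    (X : Matrix (Fin d) (Fin d) ℝ) (hX0 : X ≠ 0) (hXs : X.IsSymm)
    (hXb : X.trace = α * Real.sqrt ((X * X).trace))
    (S : Matrix (Fin d) (Fin d) ℝ)
    (hS : S = ((d : ℝ) - α ^ 2)⁻¹ • ((1 : Matrix (Fin d) (Fin d) ℝ) - (α ^ 2 / X.trace) • X))
    (q : ℝ → ℝ)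
    (hq : ∀ t : ℝ, q t =
      ((((1 : Matrix (Fin d) (Fin d) ℝ) + t • X) * S) *
        (((1 : Matrix (Fin d) (Fin d) ℝ) + t • X) * S)).trace)
    (E : ℝ → Matrix (Fin d) (Fin d) ℝ)
    (hE : ∀ t : ℝ, E t = (1 + t)⁻¹ • ((1 : Matrix (Fin d) (Fin d) ℝ) + t • X))
    (β : ℝ) (hβ : β = α * Real.sqrt ((1 + α) / 2)) :
    (∃ a b c : ℝ, 0 < a ∧ ∀ t : ℝ, q t = a * t ^ 2 + b * t + c) ∧
    ∃ tbar : ℝ,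
      (∀ t : ℝ, t ≠ tbar → q tbar < q t) ∧
      α / (2 * Real.sqrt ((X * X).trace)) < tbar ∧
      ∀ t ∈ Set.Icc (tbar - (tbar - α / (2 * Real.sqrt ((X * X).trace))))
          (tbar + (tbar - α / (2 * Real.sqrt ((X * X).trace)))),
        (E t).PosDef ∧ ∀ Z ∈ matQuadCone (E t) β, Z ≠ 0 → 0 < (S * Z).trace := by
  have hn := sqrt_trace_mul_self_pos hXs hX0
  set n := √((X * X).trace)
  have htr : (n⁻¹ • X).trace = α := by
    rw [trace_smul, hXb, smul_eq_mul, mul_comm, mul_inv_cancel_right₀ hn.ne']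
  have hSN : S = dualPoint α (n⁻¹ • X) := by
    rw [hS, dualPoint, Fintype.card_fin, hXb, smul_smul, sq, mul_div_mul_left _ _ hα.ne',
      div_eq_mul_inv]
  have hline (t : ℝ) : 1 + t • X = 1 + (t * n) • n⁻¹ • X := by
    rw [smul_smul, mul_inv_cancel_right₀ hn.ne']
  obtain ⟨a, c, m, ha, hm, hvertex, hcone⟩ :=
    exists_vertex_form_and_dual_cone hα hα1 (hXs.smul n⁻¹)
      (trace_inv_sqrt_smul_mul_self hn) htr
  have hqv (t : ℝ) : q t = a * (t * n - m) ^ 2 + c := by rw [hq, hline, hSN, hvertex]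
  refine ⟨⟨a * n ^ 2, -2 * a * m * n, a * m ^ 2 + c, by positivity, fun t => by rw [hqv]; ring⟩,
    m / n, fun t ht => ?_, by rw [← div_div]; gcongr, fun t ht => ?_⟩
  · have : t * n - m ≠ 0 := sub_ne_zero.2 fun h => ht (eq_div_of_mul_eq hn.ne' h)
    rw [hqv, hqv, div_mul_cancel₀ m hn.ne', sub_self, zero_pow two_ne_zero, mul_zero]
    gcongr
    positivity
  · have ht₀ : 0 < t := ht.1.trans_lt' (by rw [sub_sub_cancel]; positivity)
    have habs : |t * n - m| ≤ m - α / 2 :=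
      (abs_mul_sub_le_of_mem_Icc hn ht).trans_eq (by field_simp)
    obtain ⟨hpos, hdual⟩ := hcone (t * n) habs
    have hdet := (isUnit_iff_isUnit_det _).1 hpos.isUnit
    rw [hE, hline, matQuadCone_smul hdet β (by positivity), hβ, hSN]
    exact ⟨hpos.smul (by positivity), hdual⟩
end
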